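/- For all integers n ≥ 2 and 1 ≤ r ≤ n, one has 2^r · r! · S_D(n,r) = Σ_{k=0}^{r} A_D(n,k) · C(n−k, r−k) + n · 2^{n−1} · (r−1)! · S(n−1, r−1), where C(a,b) denotes the binomial coefficient. -/

import Mathlib

open Classical Finset

/-! ### Signed permutations (type B), window notation -/

/-- `w` is the window notation of a signed permutation of `{1,…,n}`. -/
def IsSignedPerm {n : ℕ} (w : Fin n → ℤ) : Prop :=
  (∀ i, 1 ≤ |w i| ∧ |w i| ≤ (n : ℤ)) ∧ Function.Injective fun i => |w i|

/-- The value `β(i)` for `1 ≤ i ≤ n`, and `0` otherwise (so `β(0) = 0`). -/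
def bVal {n : ℕ} (w : Fin n → ℤ) (i : ℕ) : ℤ :=
  if h : 1 ≤ i ∧ i ≤ n then w ⟨i - 1, by omega⟩ else 0

/-- Type `B` descent number: `#{i ∈ {0,…,n−1} : β(i) > β(i+1)}`, with `β(0) = 0`. -/
noncomputable def desB {n : ℕ} (w : Fin n → ℤ) : ℕ :=
  ((Finset.range n).filter fun i => bVal w (i + 1) < bVal w i).card

/-- Type `B` Eulerian number `A_B(n,k)`. -/
noncomputable def EulB (n k : ℕ) : ℕ :=
  Nat.card { w : Fin n → ℤ // IsSignedPerm w ∧ desB w = k }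

/-- Type `D` descent number: as in type `B` but with the convention `γ(0) = −γ(2)`. -/
noncomputable def desD {n : ℕ} (w : Fin n → ℤ) : ℕ :=
  ((Finset.range n).filter fun i =>
    bVal w (i + 1) < (if i = 0 then -(bVal w 2) else bVal w i)).card

/-- `w` has an even number of negative entries. -/
def IsEvenSigned {n : ℕ} (w : Fin n → ℤ) : Prop :=
  Even ((Finset.univ.filter fun i => w i < 0)).card

/-- Type `D` Eulerian number `A_D(n,k)`. -/
noncomputable def EulD (n k : ℕ) : ℕ :=
  Nat.card { w : Fin n → ℤ // IsSignedPerm w ∧ IsEvenSigned w ∧ desD w = k }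

/-! ### Set partitions of types B and D -/

/-- The negative `−C` of a block `C`. -/
def negSet (C : Finset ℤ) : Finset ℤ := C.image fun x => -x

/-- A `Bₙ`-partition: a set partition of `{−n,…,−1,1,…,n}` such that at most one block
satisfies `C = −C` (the zero-block), and `−C` is a block whenever `C` is. -/
structure BPartition (n : ℕ) where
  blocks : Finset (Finset ℤ)
  cover : ∀ x : ℤ, (x ≠ 0 ∧ |x| ≤ (n : ℤ)) ↔ ∃ C ∈ blocks, x ∈ C
  nonempty : ∀ C ∈ blocks, C.Nonempty
  disj : ∀ C ∈ blocks, ∀ C' ∈ blocks, C ≠ C' → Disjoint C C'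
  closed : ∀ C ∈ blocks, negSet C ∈ blocks
  zeroUnique : ∀ C ∈ blocks, ∀ C' ∈ blocks, negSet C = C → negSet C' = C' → C = C'

/-- A `Dₙ`-partition: a `Bₙ`-partition whose zero-block, if present, has at least
two positive elements. -/
def IsDPartition {n : ℕ} (P : BPartition n) : Prop :=
  ∀ C ∈ P.blocks, negSet C = C → 2 ≤ (C.filter fun x => 0 < x).card

/-- `P` has exactly `r` pairs `{C, −C}` of nonzero blocks. -/
def hasPairs {n : ℕ} (P : BPartition n) (r : ℕ) : Prop :=
  (P.blocks.filter fun C => negSet C ≠ C).card = 2 * r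

/-- Stirling number of the second kind of type `B`. -/
noncomputable def SB (n r : ℕ) : ℕ :=
  Nat.card { P : BPartition n // hasPairs P r }

/-- Stirling number of the second kind of type `D`. -/
noncomputable def SD (n r : ℕ) : ℕ :=
  Nat.card { P : BPartition n // IsDPartition P ∧ hasPairs P r }

/-- An ordered `Bₙ`-partition: a `Bₙ`-partition with a linear order on its blocks in
which the zero-block (if present) comes first and `C, −C` are always adjacent. -/
structure OrderedBPartition (n : ℕ) where
  P : BPartition n
  order : List (Finset ℤ)
  nodup : order.Nodup
  same : order.toFinset = P.blocks
  zeroFirst : ∀ C ∈ P.blocks, negSet C = C → order[0]? = some C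
  adjacent : ∀ C ∈ P.blocks, negSet C ≠ C →
    ∃ i : ℕ, (order[i]? = some C ∧ order[i+1]? = some (negSet C)) ∨
             (order[i]? = some (negSet C) ∧ order[i+1]? = some C)

/-! ### Classical Stirling and Eulerian numbers -/

/-- The classical Stirling number of the second kind `S(n,r)`. -/
noncomputable def Stir (n r : ℕ) : ℕ :=
  Nat.card { P : Finpartition (Finset.univ : Finset (Fin n)) // P.parts.card = r }

/-- Number of descents of a permutation of `{1,…,n}`. -/
noncomputable def desA {n : ℕ} (σ : Equiv.Perm (Fin n)) : ℕ :=
  ((Finset.range (n - 1)).filter fun i =>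
    ∃ h : i + 1 < n, σ ⟨i + 1, h⟩ < σ ⟨i, Nat.lt_of_succ_lt h⟩).card

/-- The classical Eulerian number `A(n,k)`: permutations with `k−1` descents
(and `A(n,0) = 0`). -/
noncomputable def EulA (n k : ℕ) : ℕ :=
  if k = 0 then 0 else Nat.card { σ : Equiv.Perm (Fin n) // desA σ = k - 1 }

/-! ### Colored permutations -/

/-- `π` is (the window notation of) a colored permutation in `G_{m,n}`. -/
def IsColoredPerm {m n : ℕ} (π : Fin n → Fin n × ZMod m) : Prop :=
  Function.Bijective fun i => (π i).1

/-- The color order `a ≺ b` on the colored alphabet. -/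
def colorLt {m n : ℕ} (a b : Fin n × ZMod m) : Prop :=
  b.2.val < a.2.val ∨ (a.2 = b.2 ∧ a.1 < b.1)

/-- The descent number `des_G` of a colored permutation. -/
noncomputable def desG {m n : ℕ} (π : Fin n → Fin n × ZMod m) : ℕ :=
  ((Finset.range (n - 1)).filter fun i =>
    ∃ h : i + 1 < n, colorLt (π ⟨i + 1, h⟩) (π ⟨i, Nat.lt_of_succ_lt h⟩)).card
  + (if h : 0 < n then (if (π ⟨0, h⟩).2 ≠ 0 then 1 else 0) else 0)

/-- The Eulerian number `A_m(n,k)` of `G_{m,n}`. -/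
noncomputable def EulG (m n k : ℕ) : ℕ :=
  Nat.card { π : Fin n → Fin n × ZMod m // IsColoredPerm π ∧ desG π = k }

/-- The shift `C^{[t]}` of a block of the colored alphabet. -/
def shiftBlock {m n : ℕ} (t : ZMod m) (C : Finset (Fin n × ZMod m)) :
    Finset (Fin n × ZMod m) :=
  C.image fun p => (p.1, p.2 + t)

/-- A `G_{m,n}`-partition. -/
structure GPartition (m n : ℕ) where
  blocks : Finset (Finset (Fin n × ZMod m))
  cover : ∀ x : Fin n × ZMod m, ∃ C ∈ blocks, x ∈ C
  nonempty : ∀ C ∈ blocks, C.Nonempty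
  disj : ∀ C ∈ blocks, ∀ C' ∈ blocks, C ≠ C' → Disjoint C C'
  closed : ∀ C ∈ blocks, shiftBlock 1 C ∈ blocks
  zeroUnique : ∀ C ∈ blocks, ∀ C' ∈ blocks,
    shiftBlock 1 C = C → shiftBlock 1 C' = C' → C = C'

/-- The number of equivalence classes (orbits under shifting) of nonzero blocks. -/
noncomputable def numClasses {m n : ℕ} (P : GPartition m n) : ℕ :=
  ((P.blocks.filter fun C => shiftBlock 1 C ≠ C).image
    fun C => (Finset.range m).image fun t => shiftBlock (t : ZMod m) C).card

/-- Stirling number of the second kind `S_m(n,r)` for `G_{m,n}`. -/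
noncomputable def SG (m n r : ℕ) : ℕ :=
  Nat.card { P : GPartition m n // numClasses P = r }

/-- An ordered `G_{m,n}`-partition. -/
structure OrderedGPartition (m n : ℕ) where
  P : GPartition m n
  order : List (Finset (Fin n × ZMod m))
  nodup : order.Nodup
  same : order.toFinset = P.blocks
  zeroFirst : ∀ C ∈ P.blocks, shiftBlock 1 C = C → order[0]? = some C
  consec : ∀ C ∈ P.blocks, shiftBlock 1 C ≠ C →
    ∃ i : ℕ, ∃ s : ZMod m, ∀ t : ℕ, t < m →
      order[i + t]? = some (shiftBlock (s + (t : ZMod m)) C)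



/-- The finset of all signed permutations. -/
noncomputable def WW (n : ℕ) : Finset (Fin n → ℤ) :=
  (Fintype.piFinset fun _ => Finset.Icc (-(n : ℤ)) n).filter IsSignedPerm

lemma mem_WW {n : ℕ} (w : Fin n → ℤ) : w ∈ WW n ↔ IsSignedPerm w := by
  unfold WW
  rw [mem_filter, Fintype.mem_piFinset]
  refine ⟨fun h => h.2, fun h => ⟨fun i => ?_, h⟩⟩
  have := (h.1 i).2
  rw [abs_le] at this
  exact mem_Icc.2 this

noncomputable def DesB {n : ℕ} (w : Fin n → ℤ) : Finset ℕ :=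
  (Finset.range n).filter fun i => bVal w (i + 1) < bVal w i

noncomputable def DesD {n : ℕ} (w : Fin n → ℤ) : Finset ℕ :=
  (Finset.range n).filter fun i =>
    bVal w (i + 1) < (if i = 0 then -(bVal w 2) else bVal w i)

lemma bVal_succ {n : ℕ} (w : Fin n → ℤ) (i : ℕ) (h : i < n) : bVal w (i + 1) = w ⟨i, h⟩ := by
  unfold bVal
  rw [dif_pos ⟨by omega, by omega⟩]
  rfl

lemma bVal_zero {n : ℕ} (w : Fin n → ℤ) : bVal w 0 = 0 := by
  unfold bVal
  rw [dif_neg (by omega)]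

lemma EulD_eq (n k : ℕ) :
    EulD n k = #((WW n).filter fun w => IsEvenSigned w ∧ #(DesD w) = k) := by
  unfold EulD
  rw [Nat.subtype_card]
  intro w
  rw [mem_filter, mem_WW]
  rfl

/-- flip the sign of the first entry -/
def flip0 {n : ℕ} (w : Fin n → ℤ) : Fin n → ℤ := fun i => if i.val = 0 then - w i else w i

lemma flip0_flip0 {n : ℕ} (w : Fin n → ℤ) : flip0 (flip0 w) = w := by
  funext i
  unfold flip0
  split_ifs <;> simp

lemma flip0_abs {n : ℕ} (w : Fin n → ℤ) (i : Fin n) : |flip0 w i| = |w i| := by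
  unfold flip0
  split_ifs <;> simp

lemma flip0_signed {n : ℕ} (w : Fin n → ℤ) : flip0 w ∈ WW n ↔ w ∈ WW n := by
  rw [mem_WW, mem_WW]
  unfold IsSignedPerm
  simp only [flip0_abs]

lemma signed_ne {n : ℕ} {w : Fin n → ℤ} (hw : w ∈ WW n) (i : Fin n) : w i ≠ 0 := by
  rw [mem_WW] at hw
  have := (hw.1 i).1
  intro h
  rw [h] at this
  simp at this

lemma flip0_even {n : ℕ} (hn : 2 ≤ n) {w : Fin n → ℤ} (hw : w ∈ WW n) :
    IsEvenSigned (flip0 w) ↔ ¬ IsEvenSigned w := by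
  unfold IsEvenSigned
  obtain ⟨m, rfl⟩ : ∃ m, n = m + 1 := ⟨n - 1, by omega⟩
  have h0 := signed_ne hw 0
  simp only [Finset.card_filter, Fin.sum_univ_succ]
  have e : ∀ i : Fin m, flip0 w i.succ = w i.succ := by
    intro i; simp [flip0]
  have e0 : flip0 w 0 = - w 0 := by simp [flip0]
  simp only [e, e0]
  rcases lt_or_gt_of_ne h0 with h | h
  · rw [if_neg (by omega), if_pos h, zero_add, Nat.even_add]
    simp
  · rw [if_pos (by omega), if_neg (by omega), Nat.even_add, zero_add]
    simp

/-- descent relations between positions -/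
lemma mem_DesD_zero {n : ℕ} (hn : 2 ≤ n) (w : Fin n → ℤ) :
    0 ∈ DesD w ↔ w ⟨0, by omega⟩ < - w ⟨1, by omega⟩ := by
  unfold DesD
  rw [mem_filter, mem_range, if_pos rfl, bVal_succ w 0 (by omega), bVal_succ w 1 (by omega)]
  exact ⟨fun h => h.2, fun h => ⟨by omega, h⟩⟩

lemma mem_DesD_succ {n : ℕ} (hn : 2 ≤ n) (w : Fin n → ℤ) (i : ℕ) :
    i + 1 ∈ DesD w ↔ ∃ h : i + 1 < n, w ⟨i + 1, h⟩ < w ⟨i, by omega⟩ := by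
  unfold DesD
  rw [mem_filter, mem_range, if_neg (by omega)]
  constructor
  · rintro ⟨h, h2⟩
    rw [bVal_succ w _ h, bVal_succ w i (by omega)] at h2
    exact ⟨h, h2⟩
  · rintro ⟨h, h2⟩
    rw [bVal_succ w _ h, bVal_succ w i (by omega)]
    exact ⟨h, h2⟩

lemma mem_DesB_zero {n : ℕ} (hn : 2 ≤ n) (w : Fin n → ℤ) :
    0 ∈ DesB w ↔ w ⟨0, by omega⟩ < 0 := by
  unfold DesB
  rw [mem_filter, mem_range, bVal_zero, bVal_succ w 0 (by omega)]
  exact ⟨fun h => h.2, fun h => ⟨by omega, h⟩⟩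

lemma mem_DesB_succ {n : ℕ} (w : Fin n → ℤ) (i : ℕ) :
    i + 1 ∈ DesB w ↔ ∃ h : i + 1 < n, w ⟨i + 1, h⟩ < w ⟨i, by omega⟩ := by
  unfold DesB
  rw [mem_filter, mem_range]
  constructor
  · rintro ⟨h, h2⟩
    rw [bVal_succ w _ h, bVal_succ w i (by omega)] at h2
    exact ⟨h, h2⟩
  · rintro ⟨h, h2⟩
    rw [bVal_succ w _ h, bVal_succ w i (by omega)]
    exact ⟨h, h2⟩

lemma DesD_subset_range {n : ℕ} (w : Fin n → ℤ) : DesD w ⊆ range n := filter_subset _ _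
lemma DesB_subset_range {n : ℕ} (w : Fin n → ℤ) : DesB w ⊆ range n := filter_subset _ _

lemma mem_DesD_flip {n : ℕ} (hn : 2 ≤ n) (w : Fin n → ℤ) (i : ℕ) :
    i ∈ DesD (flip0 w) ↔ Equiv.swap 0 1 i ∈ DesD w := by
  rcases i with _ | _ | i
  · rw [Equiv.swap_apply_left, mem_DesD_zero hn, mem_DesD_succ hn w 0]
    simp only [flip0, zero_add, if_true, one_ne_zero, if_false]
    constructor
    · intro h; exact ⟨by omega, by linarith⟩
    · rintro ⟨_, h⟩; linarith
  · rw [zero_add, Equiv.swap_apply_right, mem_DesD_zero hn, mem_DesD_succ hn _ 0]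
    simp only [flip0, zero_add, if_true, one_ne_zero, if_false]
    constructor
    · rintro ⟨_, h⟩; linarith
    · intro h; exact ⟨by omega, by linarith⟩
  · rw [Equiv.swap_apply_of_ne_of_ne (by omega) (by omega), mem_DesD_succ hn, mem_DesD_succ hn]
    simp [flip0]

lemma DesD_flip {n : ℕ} (hn : 2 ≤ n) (w : Fin n → ℤ) :
    DesD (flip0 w) = (DesD w).map (Equiv.swap 0 1).toEmbedding := by
  ext i
  rw [mem_DesD_flip hn, mem_map_equiv, Equiv.symm_swap]

lemma card_DesD_flip {n : ℕ} (hn : 2 ≤ n) (w : Fin n → ℤ) : #(DesD (flip0 w)) = #(DesD w) := by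
  rw [DesD_flip hn, card_map]

lemma two_EulD (n k : ℕ) (hn : 2 ≤ n) :
    2 * EulD n k = #((WW n).filter fun w => #(DesD w) = k) := by
  rw [EulD_eq, two_mul]
  have h1 : #((WW n).filter fun w => IsEvenSigned w ∧ #(DesD w) = k)
      = #((WW n).filter fun w => ¬ IsEvenSigned w ∧ #(DesD w) = k) := by
    apply Finset.card_nbij' flip0 flip0
    · intro w hw
      simp only [coe_filter, Set.mem_ofPred_eq] at hw ⊢
      rw [flip0_signed, flip0_even hn hw.1, card_DesD_flip hn]
      tauto
    · intro w hw
      simp only [coe_filter, Set.mem_ofPred_eq] at hw ⊢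
      rw [flip0_signed, flip0_even hn hw.1, card_DesD_flip hn]
      tauto
    · intro w _; exact flip0_flip0 w
    · intro w _; exact flip0_flip0 w
  nth_rw 2 [h1]
  rw [← card_union_of_disjoint]
  · congr 1
    ext w
    simp only [mem_union, mem_filter]
    tauto
  · rw [Finset.disjoint_left]
    intro w
    simp only [mem_filter]
    tauto

lemma card_between (n r : ℕ) (D : Finset ℕ) (hD : D ⊆ range n) (h : #D ≤ r) :
    #((powersetCard r (range n)).filter fun S => D ⊆ S) = (n - #D).choose (r - #D) := by
  have : #(range n \ D) = n - #D := by rw [card_sdiff_of_subset hD, card_range]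
  rw [← this, ← card_powersetCard]
  apply Finset.card_nbij' (fun S => S \ D) (fun S => S ∪ D)
  · intro S hS
    simp only [coe_filter, mem_powersetCard, Set.mem_ofPred_eq, mem_coe] at hS ⊢
    exact ⟨sdiff_subset_sdiff hS.1.1 (le_refl _), by rw [card_sdiff_of_subset hS.2, hS.1.2]⟩
  · intro S hS
    simp only [coe_filter, mem_powersetCard, Set.mem_ofPred_eq, mem_coe] at hS ⊢
    have hd : Disjoint S D := by
      rw [Finset.disjoint_left]; intro x hx; exact (mem_sdiff.1 (hS.1 hx)).2
    refine ⟨⟨union_subset (hS.1.trans sdiff_subset) hD, ?_⟩, subset_union_right⟩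
    rw [card_union_of_disjoint hd, hS.2]; omega
  · intro S hS
    simp only [coe_filter, mem_powersetCard, Set.mem_ofPred_eq] at hS
    exact sdiff_union_of_subset hS.2
  · intro S hS
    simp only [mem_coe, mem_powersetCard] at hS
    have hd : Disjoint S D := by
      rw [Finset.disjoint_left]; intro x hx; exact (mem_sdiff.1 (hS.1 hx)).2
    exact union_sdiff_cancel_right hd

noncomputable def ND (n : ℕ) (S : Finset ℕ) : Finset (Fin n → ℤ) :=
  (WW n).filter fun w => DesD w ⊆ S
noncomputable def NB (n : ℕ) (S : Finset ℕ) : Finset (Fin n → ℤ) :=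
  (WW n).filter fun w => DesB w ⊆ S

lemma two_sum_EulD (n r : ℕ) (hn : 2 ≤ n) :
    2 * (∑ k ∈ Finset.range (r + 1), EulD n k * Nat.choose (n - k) (r - k)) =
      ∑ S ∈ powersetCard r (range n), #(ND n S) := by
  have h1 : ∑ S ∈ powersetCard r (range n), #(ND n S)
      = ∑ w ∈ WW n, #((powersetCard r (range n)).filter fun S => DesD w ⊆ S) := by
    unfold ND
    simp only [card_filter]
    rw [sum_comm]
  have h2 : ∀ w ∈ WW n, #((powersetCard r (range n)).filter fun S => DesD w ⊆ S)
      = ∑ k ∈ range (r + 1), if #(DesD w) = k then (n - k).choose (r - k) else 0 := by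
    intro w _
    rw [sum_ite_eq]
    split_ifs with h
    · exact card_between n r _ (DesD_subset_range w) (by rw [mem_range] at h; omega)
    · rw [card_eq_zero, filter_eq_empty_iff]
      intro S hS hsub
      have := card_le_card hsub
      rw [(mem_powersetCard.1 hS).2] at this
      rw [mem_range] at h; omega
  rw [h1, sum_congr rfl h2, sum_comm, mul_sum]
  apply sum_congr rfl
  intro k _
  rw [← sum_filter, sum_const, ← two_EulD n k hn, smul_eq_mul, mul_assoc]

lemma ND_eq_NB (n : ℕ) (hn : 2 ≤ n) (S : Finset ℕ) (h0 : 0 ∈ S) : ND n S = NB n S := by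
  unfold ND NB
  apply filter_congr
  intro w _
  constructor
  · intro h i hi
    rcases i with _ | i
    · exact h0
    · apply h; rw [mem_DesD_succ hn]; exact (mem_DesB_succ w i).1 hi
  · intro h i hi
    rcases i with _ | i
    · exact h0
    · apply h; rw [mem_DesB_succ]; exact (mem_DesD_succ hn w i).1 hi

/-- swapping 0 and 1 in a set -/
def swp (S : Finset ℕ) : Finset ℕ := S.map (Equiv.swap 0 1).toEmbedding

lemma mem_swp (S : Finset ℕ) (i : ℕ) : i ∈ swp S ↔ Equiv.swap 0 1 i ∈ S := by
  unfold swp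
  rw [mem_map_equiv, Equiv.symm_swap]

lemma swp_swp (S : Finset ℕ) : swp (swp S) = S := by
  ext i
  rw [mem_swp, mem_swp, Equiv.swap_apply_self]

lemma card_ND_swp (n : ℕ) (hn : 2 ≤ n) (S : Finset ℕ) : #(ND n (swp S)) = #(ND n S) := by
  have key : ∀ w : Fin n → ℤ, ∀ S, DesD w ⊆ S → DesD (flip0 w) ⊆ swp S := by
    intro w S h
    rw [DesD_flip hn]
    exact map_subset_map.2 h
  apply Finset.card_nbij' flip0 flip0
  · intro w hw
    simp only [ND, coe_filter, Set.mem_ofPred_eq] at hw ⊢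
    refine ⟨(flip0_signed w).2 hw.1, ?_⟩
    have := key _ _ hw.2
    rwa [swp_swp] at this
  · intro w hw
    simp only [ND, coe_filter, Set.mem_ofPred_eq] at hw ⊢
    exact ⟨(flip0_signed w).2 hw.1, key _ _ hw.2⟩
  · intro w _; exact flip0_flip0 w
  · intro w _; exact flip0_flip0 w

lemma card_ND_two (n : ℕ) (hn : 2 ≤ n) (S : Finset ℕ) (h0 : 0 ∉ S) (h1 : 1 ∉ S) :
    #(ND n S) = 2 * #(NB n S) := by
  have e1 : (ND n S).filter (fun w => 0 < w ⟨0, by omega⟩) = NB n S := by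
    ext w
    simp only [ND, NB, mem_filter]
    constructor
    · rintro ⟨⟨hw, h⟩, hp⟩
      refine ⟨hw, fun i hi => ?_⟩
      rcases i with _ | i
      · rw [mem_DesB_zero hn] at hi; omega
      · apply h; rw [mem_DesD_succ hn]; exact (mem_DesB_succ w i).1 hi
    · rintro ⟨hw, h⟩
      have hp : 0 < w ⟨0, by omega⟩ := by
        by_contra hc
        have hne := signed_ne hw ⟨0, by omega⟩
        exact h0 (h ((mem_DesB_zero hn w).2 (by omega)))
      refine ⟨⟨hw, fun i hi => ?_⟩, hp⟩
      rcases i with _ | i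
      · rw [mem_DesD_zero hn] at hi
        exfalso
        apply h1
        apply h
        rw [mem_DesB_succ w 0]
        exact ⟨by omega, by simp only [zero_add]; omega⟩
      · apply h; rw [mem_DesB_succ]; exact (mem_DesD_succ hn w i).1 hi
  have hs : swp S = S := by
    ext i
    rw [mem_swp]
    rcases i with _ | _ | i
    · rw [Equiv.swap_apply_left]; tauto
    · rw [zero_add, Equiv.swap_apply_right]; tauto
    · rw [Equiv.swap_apply_of_ne_of_ne (by omega) (by omega)]
  have e2 : #((ND n S).filter (fun w => 0 < w ⟨0, by omega⟩)) =
      #((ND n S).filter (fun w => ¬ 0 < w ⟨0, by omega⟩)) := by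
    have key : ∀ w : Fin n → ℤ, DesD w ⊆ S → DesD (flip0 w) ⊆ S := by
      intro w h
      rw [DesD_flip hn]
      have := map_subset_map (f := (Equiv.swap 0 1).toEmbedding) |>.2 h
      exact this.trans (le_of_eq hs)
    apply Finset.card_nbij' flip0 flip0
    · intro w hw
      simp only [ND, coe_filter, Set.mem_ofPred_eq, mem_filter] at hw ⊢
      refine ⟨⟨(flip0_signed w).2 hw.1.1, key _ hw.1.2⟩, ?_⟩
      simp only [flip0, if_true]; omega
    · intro w hw
      simp only [ND, coe_filter, Set.mem_ofPred_eq, mem_filter] at hw ⊢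
      refine ⟨⟨(flip0_signed w).2 hw.1.1, key _ hw.1.2⟩, ?_⟩
      have hne := signed_ne hw.1.1 ⟨0, by omega⟩
      simp only [flip0, if_true]; omega
    · intro w _; exact flip0_flip0 w
    · intro w _; exact flip0_flip0 w
  rw [← card_filter_add_card_filter_not (s := ND n S) (fun w => 0 < w ⟨0, by omega⟩), ← e2, e1]
  ring

lemma swp_mem (n r : ℕ) (hn : 2 ≤ n) (S : Finset ℕ) (h : S ∈ powersetCard r (range n)) :
    swp S ∈ powersetCard r (range n) := by
  rw [mem_powersetCard] at h ⊢
  refine ⟨fun i hi => ?_, by unfold swp; rw [card_map]; exact h.2⟩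
  rw [mem_swp] at hi
  have := mem_range.1 (h.1 hi)
  rcases i with _ | _ | i
  · exact mem_range.2 (by omega)
  · exact mem_range.2 (by omega)
  · rw [Equiv.swap_apply_of_ne_of_ne (by omega) (by omega)] at this
    exact mem_range.2 this

lemma sum_ND (n r : ℕ) (hn : 2 ≤ n) :
    ∑ S ∈ powersetCard r (range n), #(ND n S) +
      ∑ S ∈ (powersetCard r (range n)).filter (fun S => 0 ∈ S ∧ 1 ∈ S), #(NB n S) =
    2 * ∑ S ∈ (powersetCard r (range n)).filter (fun S => ¬ (0 ∉ S ∧ 1 ∈ S)), #(NB n S) := by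
  have hsw : ∑ S ∈ (powersetCard r (range n)).filter (fun S => 0 ∉ S ∧ 1 ∈ S), #(ND n S) =
      ∑ S ∈ (powersetCard r (range n)).filter (fun S => 0 ∈ S ∧ 1 ∉ S), #(NB n S) := by
    apply Finset.sum_nbij' swp swp
    · intro S hS
      rw [mem_filter] at hS ⊢
      refine ⟨swp_mem n r hn S hS.1, ?_⟩
      rw [mem_swp, mem_swp, Equiv.swap_apply_left, Equiv.swap_apply_right]
      tauto
    · intro S hS
      rw [mem_filter] at hS ⊢
      refine ⟨swp_mem n r hn S hS.1, ?_⟩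
      rw [mem_swp, mem_swp, Equiv.swap_apply_left, Equiv.swap_apply_right]
      tauto
    · intro S _; exact swp_swp S
    · intro S _; exact swp_swp S
    · intro S hS
      rw [mem_filter] at hS
      rw [← card_ND_swp n hn, ND_eq_NB n hn]
      rw [mem_swp, Equiv.swap_apply_left]
      exact hS.2.2
  simp only [sum_filter] at hsw ⊢
  have : ∀ S : Finset ℕ, #(ND n S) = (if 0 ∉ S ∧ 1 ∈ S then #(ND n S) else 0)
      + (if 0 ∈ S then #(NB n S) else 0)
      + (if 0 ∉ S ∧ 1 ∉ S then 2 * #(NB n S) else 0) := by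
    intro S
    by_cases h0 : 0 ∈ S
    · simp [h0, ND_eq_NB n hn S h0]
    · by_cases h1 : 1 ∈ S
      · simp [h0, h1]
      · simp [h0, h1, card_ND_two n hn S h0 h1]
  rw [sum_congr rfl (fun S _ => this S), sum_add_distrib, sum_add_distrib, hsw, mul_sum,
    ← sum_add_distrib, ← sum_add_distrib, ← sum_add_distrib]
  apply sum_congr rfl
  intro S _
  by_cases h0 : 0 ∈ S <;> by_cases h1 : 1 ∈ S <;> simp [h0, h1] <;> ring


/-- Level functions: `|f|` takes all values `1..r`, and is at most `r`. -/
noncomputable def FF (n r : ℕ) : Finset (Fin n → ℤ) :=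
  (Fintype.piFinset fun _ => Finset.Icc (-(r : ℤ)) r).filter
    fun f => ∀ l : ℕ, 1 ≤ l → l ≤ r → ∃ j, (f j).natAbs = l

lemma mem_FF {n r : ℕ} (f : Fin n → ℤ) :
    f ∈ FF n r ↔ (∀ j, (f j).natAbs ≤ r) ∧ ∀ l : ℕ, 1 ≤ l → l ≤ r → ∃ j, (f j).natAbs = l := by
  unfold FF
  rw [mem_filter, Fintype.mem_piFinset]
  refine and_congr_left fun _ => forall_congr' fun j => ?_
  rw [mem_Icc]; omega

noncomputable def lev (S : Finset ℕ) (i : ℕ) : ℕ := #(S.filter (· ≤ i))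

lemma lev_zero (S : Finset ℕ) : lev S 0 = if 0 ∈ S then 1 else 0 := by
  unfold lev
  have : S.filter (· ≤ 0) = if 0 ∈ S then {0} else ∅ := by
    ext i
    split_ifs with h
    · simp only [mem_filter, mem_singleton]
      constructor
      · intro h; omega
      · rintro rfl; exact ⟨h, le_refl _⟩
    · simp only [mem_filter, notMem_empty, iff_false]
      rintro ⟨h1, h2⟩
      obtain rfl : i = 0 := by omega
      exact h h1
  rw [this]
  split_ifs <;> simp

lemma lev_succ (S : Finset ℕ) (i : ℕ) : lev S (i + 1) = lev S i + if i + 1 ∈ S then 1 else 0 := by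
  unfold lev
  split_ifs with h
  · have : S.filter (· ≤ i + 1) = insert (i + 1) (S.filter (· ≤ i)) := by
      ext j
      simp only [mem_filter, mem_insert]
      constructor
      · rintro ⟨h1, h2⟩
        by_cases hj : j = i + 1
        · exact Or.inl hj
        · exact Or.inr ⟨h1, by omega⟩
      · rintro (rfl | h2)
        · exact ⟨h, le_refl _⟩
        · exact ⟨h2.1, by omega⟩
    rw [this, card_insert_of_notMem (by simp)]
  · rw [add_zero]
    congr 1
    apply filter_congr
    intro j hj
    have : j ≠ i + 1 := by rintro rfl; exact h hj
    omega

lemma lev_mono (S : Finset ℕ) : Monotone (lev S) := by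
  apply monotone_nat_of_le_succ
  intro i
  rw [lev_succ]; omega

lemma lev_le (S : Finset ℕ) (i : ℕ) : lev S i ≤ #S := card_filter_le _ _

lemma lev_last {n : ℕ} (S : Finset ℕ) (h : S ⊆ range (n + 1)) : lev S n = #S := by
  unfold lev
  rw [filter_true_of_mem]
  intro i hi
  have := mem_range.1 (h hi); omega

lemma lev_attain {n : ℕ} (S : Finset ℕ) (h : S ⊆ range (n + 1)) (l : ℕ) (h1 : 1 ≤ l)
    (h2 : l ≤ #S) : ∃ i, i < n + 1 ∧ lev S i = l := by
  have hex : ∃ i, l ≤ lev S i := ⟨n, by rw [lev_last S h]; exact h2⟩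
  refine ⟨Nat.find hex, ?_, ?_⟩
  · have := Nat.find_min' hex (m := n) (by rw [lev_last S h]; exact h2)
    omega
  · have hs := Nat.find_spec hex
    rcases hk : Nat.find hex with _ | k
    · rw [hk] at hs
      rw [lev_zero] at hs ⊢
      split_ifs at hs ⊢ <;> omega
    · rw [hk] at hs
      have := Nat.find_min hex (m := k) (by omega)
      rw [lev_succ] at hs ⊢
      split_ifs at hs ⊢ <;> omega

lemma lev_inj {n : ℕ} (S S' : Finset ℕ) (h : S ⊆ range n) (h' : S' ⊆ range n)
    (hl : ∀ i, i < n → lev S i = lev S' i) : S = S' := by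
  have key : ∀ i, i < n → (i ∈ S ↔ i ∈ S') := by
    intro i hi
    rcases i with _ | i
    · have := hl 0 hi
      rw [lev_zero, lev_zero] at this
      split_ifs at this <;> tauto
    · have h1 := hl (i + 1) hi
      have h2 := hl i (by omega)
      rw [lev_succ, lev_succ, h2] at h1
      split_ifs at h1 <;> first | tauto | omega
  ext i
  constructor
  · intro hi; exact (key i (mem_range.1 (h hi))).1 hi
  · intro hi; exact (key i (mem_range.1 (h' hi))).2 hi

noncomputable def Phi {n : ℕ} (w : Fin n → ℤ) (S : Finset ℕ) : Fin n → ℤ :=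
  fun j => ∑ i, if |w i| = (j : ℤ) + 1 then (w i).sign * (lev S i : ℤ) else 0

lemma signed_equiv {n : ℕ} {w : Fin n → ℤ} (hw : w ∈ WW n) :
    ∃ σ : Equiv.Perm (Fin n), ∀ i, |w i| = (σ i : ℤ) + 1 := by
  rw [mem_WW] at hw
  have hb : ∀ i, ∃ j : Fin n, |w i| = (j : ℤ) + 1 := by
    intro i
    have := hw.1 i
    refine ⟨⟨(|w i|).toNat - 1, by omega⟩, ?_⟩
    simp only
    omega
  choose s hs using hb
  have hinj : Function.Injective s := by
    intro a b hab
    apply hw.2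
    simp only [hs, hab]
  exact ⟨Equiv.ofBijective s (Finite.injective_iff_bijective.1 hinj), hs⟩

lemma Phi_apply {n : ℕ} {w : Fin n → ℤ} (S : Finset ℕ) (σ : Equiv.Perm (Fin n))
    (h : ∀ i, |w i| = (σ i : ℤ) + 1) (i : Fin n) :
    Phi w S (σ i) = (w i).sign * (lev S i : ℤ) := by
  unfold Phi
  rw [Finset.sum_eq_single i]
  · rw [if_pos (h i)]
  · intro b _ hb
    rw [if_neg]
    rw [h b]
    intro he
    apply hb
    apply σ.injective
    apply Fin.ext
    omega
  · intro h; exact absurd (mem_univ _) h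

lemma Phi_natAbs {n : ℕ} {w : Fin n → ℤ} (hw : w ∈ WW n) (S : Finset ℕ) (σ : Equiv.Perm (Fin n))
    (h : ∀ i, |w i| = (σ i : ℤ) + 1) (i : Fin n) :
    (Phi w S (σ i)).natAbs = lev S i := by
  rw [Phi_apply S σ h, Int.natAbs_mul, Int.natAbs_sign_of_ne_zero (signed_ne hw i)]
  simp

/-- signed value of an index -/
def vv {n : ℕ} (f : Fin n → ℤ) (j : Fin n) : ℤ := if f j < 0 then -((j : ℤ) + 1) else (j : ℤ) + 1

def key {n : ℕ} (f : Fin n → ℤ) (j : Fin n) : ℕ ×ₗ ℤ := toLex ((f j).natAbs, vv f j)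

lemma pos_of_lev_zero {n : ℕ} (hn : 2 ≤ n) {w : Fin n → ℤ} {S : Finset ℕ} (hw : w ∈ NB n S)
    (i : ℕ) (hi : i < n) (h : lev S i = 0) : 0 < w ⟨i, hi⟩ := by
  unfold NB at hw
  rw [mem_filter] at hw
  induction i with
  | zero =>
    have h1 : 0 ∉ DesB w := fun hc => by
      rw [lev_zero, if_pos (hw.2 hc)] at h; omega
    rw [mem_DesB_zero hn] at h1
    have := signed_ne hw.1 ⟨0, hi⟩
    omega
  | succ i ih =>
    rw [lev_succ] at h
    have h1 := ih (by omega) (by omega)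
    have h2 : i + 1 ∉ DesB w := fun hc => by
      rw [if_pos (hw.2 hc)] at h; omega
    rw [mem_DesB_succ] at h2
    push Not at h2
    have := h2 hi
    omega

lemma key_Phi {n : ℕ} (hn : 2 ≤ n) {w : Fin n → ℤ} {S : Finset ℕ} (hw : w ∈ NB n S)
    (σ : Equiv.Perm (Fin n)) (h : ∀ i, |w i| = (σ i : ℤ) + 1) (i : Fin n) :
    key (Phi w S) (σ i) = toLex (lev S i, w i) := by
  have hw' : w ∈ WW n := (mem_filter.1 hw).1
  unfold key
  rw [Phi_natAbs hw' S σ h]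
  congr 2
  unfold vv
  rw [← h i, Phi_apply S σ h]
  have hp := pos_of_lev_zero hn hw i i.2
  have hne := signed_ne hw' i
  rcases lt_or_gt_of_ne hne with hlt | hgt
  · rw [Int.sign_eq_neg_one_of_neg hlt, abs_of_neg hlt]
    have : lev S i ≠ 0 := fun h0 => by
      have := hp h0; simp only [Fin.eta] at this; omega
    rw [if_pos (by omega)]; omega
  · rw [Int.sign_eq_one_of_pos hgt, abs_of_pos hgt]
    rw [if_neg (by omega)]

lemma key_mono {n : ℕ} (hn : 2 ≤ n) {w : Fin n → ℤ} {S : Finset ℕ} (hw : w ∈ NB n S) :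
    Monotone (fun i : Fin n => (toLex (lev S i, w i) : ℕ ×ₗ ℤ)) := by
  obtain ⟨m, rfl⟩ : ∃ m, n = m + 1 := ⟨n - 1, by omega⟩
  rw [Fin.monotone_iff_le_succ]
  intro i
  rw [Prod.Lex.toLex_le_toLex]
  simp only [Fin.val_castSucc, Fin.val_succ]
  by_cases hS : (i : ℕ) + 1 ∈ S
  · left
    rw [lev_succ, if_pos hS]; omega
  · right
    refine ⟨by rw [lev_succ, if_neg hS]; omega, ?_⟩
    have h2 : (i : ℕ) + 1 ∉ DesB w := fun hc => hS ((mem_filter.1 hw).2 hc)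
    rw [mem_DesB_succ] at h2
    push Not at h2
    exact h2 (by omega)

lemma Phi_inj {n : ℕ} (hn : 2 ≤ n) {w w' : Fin n → ℤ} {S S' : Finset ℕ} (hS : S ⊆ range n)
    (hS' : S' ⊆ range n) (hw : w ∈ NB n S) (hw' : w' ∈ NB n S') (h : Phi w S = Phi w' S') :
    w = w' ∧ S = S' := by
  obtain ⟨σ, hσ⟩ := signed_equiv (mem_filter.1 hw).1
  obtain ⟨σ', hσ'⟩ := signed_equiv (mem_filter.1 hw').1
  have e : key (Phi w S) ∘ σ = fun i : Fin n => (toLex (lev S i, w i) : ℕ ×ₗ ℤ) :=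
    funext fun i => key_Phi hn hw σ hσ i
  have e' : key (Phi w S) ∘ σ' = fun i : Fin n => (toLex (lev S' i, w' i) : ℕ ×ₗ ℤ) := by
    rw [h]
    exact funext fun i => key_Phi hn hw' σ' hσ' i
  have hu := Tuple.unique_monotone (f := key (Phi w S)) (σ := σ) (τ := σ')
    (by rw [e]; exact key_mono hn hw) (by rw [e']; exact key_mono hn hw')
  rw [e, e'] at hu
  have hh : ∀ i : Fin n, lev S i = lev S' i ∧ w i = w' i := by
    intro i
    have := congrFun hu i
    simpa [Prod.ext_iff] using this
  exact ⟨funext fun i => (hh i).2, lev_inj S S' hS hS' fun i hi => (hh ⟨i, hi⟩).1⟩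

lemma Phi_mem {n r : ℕ} (hn : 2 ≤ n) {w : Fin n → ℤ} {S : Finset ℕ}
    (hS : S ∈ powersetCard r (range n)) (hw : w ∈ WW n) : Phi w S ∈ FF n r := by
  obtain ⟨σ, hσ⟩ := signed_equiv hw
  obtain ⟨hS1, hS2⟩ := mem_powersetCard.1 hS
  rw [mem_FF]
  constructor
  · intro j
    obtain ⟨i, rfl⟩ := σ.surjective j
    rw [Phi_natAbs hw S σ hσ, ← hS2]
    exact lev_le _ _
  · intro l h1 h2
    obtain ⟨m, rfl⟩ : ∃ m, n = m + 1 := ⟨n - 1, by omega⟩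
    obtain ⟨i, hi, hl⟩ := lev_attain S hS1 l h1 (by omega)
    exact ⟨σ ⟨i, hi⟩, by rw [Phi_natAbs hw S σ hσ]; exact hl⟩

lemma vv_abs {n : ℕ} (f : Fin n → ℤ) (j : Fin n) : |vv f j| = (j : ℤ) + 1 := by
  unfold vv
  split_ifs
  · rw [abs_neg, abs_of_nonneg (by omega)]
  · rw [abs_of_nonneg (by omega)]

lemma Phi_surj {n r : ℕ} (hn : 2 ≤ n) (hr : 1 ≤ r) {f : Fin n → ℤ} (hf : f ∈ FF n r) :
    ∃ S ∈ powersetCard r (range n), ∃ w ∈ NB n S, Phi w S = f := by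
  rw [mem_FF] at hf
  obtain ⟨hf1, hf2⟩ := hf
  set σ := Tuple.sort (key f) with hσdef
  have hmono : Monotone (key f ∘ σ) := Tuple.monotone_sort (key f)
  let G : ℕ → ℕ := fun i => if h : i < n then (f (σ ⟨i, h⟩)).natAbs else r
  have hG : ∀ i (h : i < n), G i = (f (σ ⟨i, h⟩)).natAbs := fun i h => dif_pos h
  have hlex : ∀ i j (hi : i < n) (hj : j < n), i ≤ j → G i < G j ∨
      (G i = G j ∧ vv f (σ ⟨i, hi⟩) ≤ vv f (σ ⟨j, hj⟩)) := by
    intro i j hi hj hij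
    have := hmono (show (⟨i, hi⟩ : Fin n) ≤ ⟨j, hj⟩ from hij)
    simp only [Function.comp, key] at this
    rw [Prod.Lex.toLex_le_toLex] at this
    rw [hG i hi, hG j hj]
    exact this
  have hGm : ∀ i j, j < n → i ≤ j → G i ≤ G j := by
    intro i j hj hij
    rcases hlex i j (by omega) hj hij with h | h <;> omega
  have hGr : ∀ i, i < n → G i ≤ r := fun i hi => by rw [hG i hi]; exact hf1 _
  have hatt : ∀ l, 1 ≤ l → l ≤ r → ∃ i, i < n ∧ G i = l := by
    intro l h1 h2
    obtain ⟨j, hj⟩ := hf2 l h1 h2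
    refine ⟨(σ.symm j).1, (σ.symm j).2, ?_⟩
    rw [hG _ (σ.symm j).2]
    simp [hj]
  let S : Finset ℕ := (range n).filter fun i => (if i = 0 then 0 else G (i - 1)) < G i
  have hlev : ∀ i, i < n → lev S i = G i := by
    intro i
    induction i with
    | zero =>
      intro hi
      have h1 : G 0 ≤ 1 := by
        by_contra hc
        obtain ⟨k, hk, hk2⟩ := hatt 1 (le_refl _) hr
        have := hGm 0 k hk (by omega)
        omega
      rw [lev_zero]
      simp only [S, mem_filter, mem_range, if_true]
      split_ifs with h <;> omega
    | succ i ih =>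
      intro hi
      have h0 := ih (by omega)
      have h1 : G (i + 1) ≤ G i + 1 := by
        by_contra hc
        have := hGr _ hi
        obtain ⟨k, hk, hk2⟩ := hatt (G i + 1) (by omega) (by omega)
        rcases Nat.lt_or_ge i k with h | h
        · have := hGm (i + 1) k hk h
          omega
        · have := hGm k i (by omega) h
          omega
      have h2 := hGm i (i + 1) hi (by omega)
      rw [lev_succ, h0]
      simp only [S, mem_filter, mem_range, Nat.add_eq_zero_iff, one_ne_zero, and_false, if_false,
        Nat.add_sub_cancel]
      split_ifs with h <;> omega
  have hSr : S ⊆ range n := filter_subset _ _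
  have hcard : #S = r := by
    obtain ⟨m, hm⟩ : ∃ m, n = m + 1 := ⟨n - 1, by omega⟩
    rw [← lev_last (n := m) S (by rw [← hm]; exact hSr), hlev m (by omega)]
    obtain ⟨k, hk, hk2⟩ := hatt r hr (le_refl _)
    have h1 := hGm k m (by omega) (by omega)
    have h2 := hGr m (by omega)
    omega
  let w : Fin n → ℤ := fun i => vv f (σ i)
  have hwabs : ∀ i, |w i| = (σ i : ℤ) + 1 := fun i => vv_abs f (σ i)
  have hw : w ∈ WW n := by
    rw [mem_WW]
    constructor
    · intro i
      rw [hwabs]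
      have := (σ i).2
      omega
    · intro a b hab
      simp only [hwabs] at hab
      apply σ.injective
      apply Fin.ext
      omega
  refine ⟨S, mem_powersetCard.2 ⟨hSr, hcard⟩, w, ?_, ?_⟩
  · unfold NB
    rw [mem_filter]
    refine ⟨hw, fun i hi => ?_⟩
    rcases i with _ | i
    · rw [mem_DesB_zero hn] at hi
      simp only [S, mem_filter, mem_range, if_true]
      refine ⟨by omega, ?_⟩
      rw [hG 0 (by omega)]
      simp only [w, vv] at hi
      split_ifs at hi with h
      · omega
      · omega
    · rw [mem_DesB_succ] at hi
      obtain ⟨h1, h2⟩ := hi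
      simp only [S, mem_filter, mem_range, Nat.add_eq_zero_iff, one_ne_zero, and_false, if_false,
        Nat.add_sub_cancel]
      refine ⟨h1, ?_⟩
      rcases hlex i (i + 1) (by omega) h1 (by omega) with h | h
      · exact h
      · exfalso
        have := h.2
        simp only [w] at h2
        omega
  · funext j
    obtain ⟨i, rfl⟩ := σ.surjective j
    rw [Phi_apply S σ hwabs, hlev i i.2, hG i i.2]
    simp only [w, vv, Fin.eta]
    split_ifs with h
    · rw [Int.sign_eq_neg_one_of_neg (by omega)]; omega
    · rw [Int.sign_eq_one_of_pos (by omega)]; omega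

lemma count_transfer {n r : ℕ} (hn : 2 ≤ n) (hr : 1 ≤ r) (p : Finset ℕ → Prop)
    (q : (Fin n → ℤ) → Prop) [DecidablePred p] [DecidablePred q]
    (hpq : ∀ w ∈ WW n, ∀ S ∈ powersetCard r (range n), (q (Phi w S) ↔ p S)) :
    ∑ S ∈ (powersetCard r (range n)).filter p, #(NB n S) = #((FF n r).filter q) := by
  rw [← card_sigma]
  apply Finset.card_bij (fun (x : Σ _ : Finset ℕ, (Fin n → ℤ)) _ => Phi x.2 x.1)
  · rintro ⟨S, w⟩ h
    rw [mem_sigma, mem_filter] at h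
    have hw := (mem_filter.1 h.2).1
    rw [mem_filter]
    exact ⟨Phi_mem hn h.1.1 hw, (hpq w hw S h.1.1).2 h.1.2⟩
  · rintro ⟨S, w⟩ h ⟨S', w'⟩ h' he
    rw [mem_sigma, mem_filter] at h h'
    obtain ⟨h1, h2⟩ := Phi_inj hn (mem_powersetCard.1 h.1.1).1 (mem_powersetCard.1 h'.1.1).1
      h.2 h'.2 he
    simp only at h1 h2
    subst h1 h2
    rfl
  · intro f hf
    rw [mem_filter] at hf
    obtain ⟨S, hS, w, hw, he⟩ := Phi_surj hn hr hf.1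
    refine ⟨⟨S, w⟩, ?_, he⟩
    rw [mem_sigma, mem_filter]
    exact ⟨⟨hS, (hpq w (mem_filter.1 hw).1 S hS).1 (by rw [he]; exact hf.2)⟩, hw⟩

lemma transfer_zero {n r : ℕ} (hn : 2 ≤ n) (hr : 1 ≤ r) :
    ∑ S ∈ (powersetCard r (range n)).filter (fun S => ¬ (0 ∉ S ∧ 1 ∈ S)), #(NB n S) =
      #((FF n r).filter fun f => ¬ ∃! j, (f j).natAbs = 0) := by
  apply count_transfer hn hr
  intro w hw S hS
  obtain ⟨σ, hσ⟩ := signed_equiv hw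
  have hl := Phi_natAbs hw S σ hσ
  rw [not_iff_not]
  have l0 := lev_zero S
  have l1 := lev_succ S 0
  rw [zero_add] at l1
  constructor
  · rintro ⟨j, hj, hu⟩
    obtain ⟨i, rfl⟩ := σ.surjective j
    simp only [hl] at hj
    have h0 : lev S 0 = 0 := by
      have := lev_mono S (Nat.zero_le i); omega
    constructor
    · intro hc; rw [if_pos hc] at l0; omega
    · by_contra hc
      rw [if_neg hc] at l1
      have a := hu (σ ⟨0, by omega⟩) (by simp only [hl]; exact h0)
      have b := hu (σ ⟨1, by omega⟩) (by simp only [hl]; omega)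
      have := σ.injective (a.trans b.symm)
      simp at this
  · rintro ⟨h0, h1⟩
    rw [if_neg h0] at l0
    rw [if_pos h1] at l1
    refine ⟨σ ⟨0, by omega⟩, by simp only [hl]; exact l0, ?_⟩
    intro j hj
    obtain ⟨i, rfl⟩ := σ.surjective j
    simp only [hl] at hj
    congr 1
    apply Fin.ext
    simp only
    by_contra hc
    have := lev_mono S (show 1 ≤ (i : ℕ) by omega)
    omega

lemma transfer_one {n r : ℕ} (hn : 2 ≤ n) (hr : 1 ≤ r) :
    ∑ S ∈ (powersetCard r (range n)).filter (fun S => 0 ∈ S ∧ 1 ∈ S), #(NB n S) =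
      #((FF n r).filter fun f => (∀ j, f j ≠ 0) ∧ ∃! j, (f j).natAbs = 1) := by
  apply count_transfer hn hr
  intro w hw S hS
  obtain ⟨σ, hσ⟩ := signed_equiv hw
  have hl := Phi_natAbs hw S σ hσ
  have l0 := lev_zero S
  have l1 := lev_succ S 0
  rw [zero_add] at l1
  constructor
  · rintro ⟨hz, j, hj, hu⟩
    have h0 : 0 ∈ S := by
      by_contra hc
      rw [if_neg hc] at l0
      apply hz (σ ⟨0, by omega⟩)
      rw [← Int.natAbs_eq_zero, hl]
      exact l0
    refine ⟨h0, ?_⟩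
    rw [if_pos h0] at l0
    by_contra hc
    rw [if_neg hc] at l1
    have a := hu (σ ⟨0, by omega⟩) (by simp only [hl]; exact l0)
    have b := hu (σ ⟨1, by omega⟩) (by simp only [hl]; omega)
    have := σ.injective (a.trans b.symm)
    simp at this
  · rintro ⟨h0, h1⟩
    rw [if_pos h0] at l0
    rw [if_pos h1] at l1
    refine ⟨?_, σ ⟨0, by omega⟩, by simp only [hl]; exact l0, ?_⟩
    · intro j
      obtain ⟨i, rfl⟩ := σ.surjective j
      rw [← Int.natAbs_ne_zero, hl]
      have := lev_mono S (Nat.zero_le i); omega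
    intro j hj
    obtain ⟨i, rfl⟩ := σ.surjective j
    simp only [hl] at hj
    congr 1
    apply Fin.ext
    simp only
    by_contra hc
    have := lev_mono S (show 1 ≤ (i : ℕ) by omega)
    omega


/-- the surjection attached to a partition with labelled blocks -/
def surjOf {m s : ℕ} (x : Σ P : { P : Finpartition (Finset.univ : Finset (Fin m)) // P.parts.card = s },
    ({C // C ∈ P.1.parts} ≃ Fin s)) : Fin m → Fin s :=
  fun j => x.2 ⟨x.1.1.part j, (x.1.1.part_mem).2 (mem_univ j)⟩

lemma surjOf_surj {m s : ℕ} (x : Σ P : { P : Finpartition (Finset.univ : Finset (Fin m)) // P.parts.card = s },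
    ({C // C ∈ P.1.parts} ≃ Fin s)) : Function.Surjective (surjOf x) := by
  intro c
  obtain ⟨⟨C, hC⟩, rfl⟩ := x.2.surjective c
  obtain ⟨j, hj⟩ := x.1.1.nonempty_of_mem_parts hC
  refine ⟨j, ?_⟩
  unfold surjOf
  congr 2
  exact x.1.1.part_eq_of_mem hC hj

lemma surjOf_inj {m s : ℕ} : Function.Injective (surjOf (m := m) (s := s)) := by
  rintro ⟨⟨P, hP⟩, e⟩ ⟨⟨P', hP'⟩, e'⟩ h
  have h1 : ∀ j k, P.part j = P.part k ↔ P'.part j = P'.part k := by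
    intro j k
    have a := congrFun h j
    have b := congrFun h k
    simp only [surjOf] at a b
    constructor
    · intro hh
      have : e ⟨P.part j, (P.part_mem).2 (mem_univ j)⟩ = e ⟨P.part k, (P.part_mem).2 (mem_univ k)⟩ := by
        congr 2
      rw [a, b] at this
      simpa using this
    · intro hh
      have : e' ⟨P'.part j, (P'.part_mem).2 (mem_univ j)⟩ = e' ⟨P'.part k, (P'.part_mem).2 (mem_univ k)⟩ := by
        congr 2
      rw [← a, ← b] at this
      simpa using this
  have h2 : ∀ j, P.part j = P'.part j := by
    intro j
    ext k
    rw [P.mem_part_iff_part_eq_part (mem_univ _) (mem_univ _),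
      P'.mem_part_iff_part_eq_part (mem_univ _) (mem_univ _), h1]
  have h3 : P = P' := by
    have key : ∀ Q Q' : Finpartition (univ : Finset (Fin m)), (∀ j, Q.part j = Q'.part j) →
        Q.parts ⊆ Q'.parts := by
      intro Q Q' hq C hC
      obtain ⟨j, hj⟩ := Q.nonempty_of_mem_parts hC
      rw [← Q.part_eq_of_mem hC hj, hq j]
      exact (Q'.part_mem).2 (mem_univ j)
    apply Finpartition.ext
    exact subset_antisymm (key _ _ h2) (key _ _ fun j => (h2 j).symm)
  subst h3
  have h4 : e = e' := by
    ext ⟨C, hC⟩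
    obtain ⟨j, hj⟩ := P.nonempty_of_mem_parts hC
    have a := congrFun h j
    simp only [surjOf] at a
    have hc : (⟨P.part j, (P.part_mem).2 (mem_univ j)⟩ : {C // C ∈ P.parts}) = ⟨C, hC⟩ := by
      apply Subtype.ext
      exact P.part_eq_of_mem hC hj
    rw [hc] at a
    rw [a]
  subst h4
  rfl

lemma surjOf_exists {m s : ℕ} (h : Fin m → Fin s) (hh : Function.Surjective h) :
    ∃ x, surjOf x = h := by
  let P : Finpartition (univ : Finset (Fin m)) := Finpartition.ofSetoid (Setoid.ker h)
  have hP : ∀ j k, k ∈ P.part j ↔ h j = h k := by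
    intro j k
    exact Finpartition.mem_part_ofSetoid_iff_rel
  choose g hg using hh
  let F : Fin s → {C // C ∈ P.parts} := fun c => ⟨P.part (g c), (P.part_mem).2 (mem_univ _)⟩
  have hF : Function.Bijective F := by
    constructor
    · intro a b hab
      have h1 : P.part (g a) = P.part (g b) := congrArg Subtype.val hab
      have h2 : g b ∈ P.part (g a) := by rw [h1]; exact P.mem_part_self.2 (mem_univ _)
      rw [hP, hg, hg] at h2
      exact h2
    · rintro ⟨C, hC⟩
      obtain ⟨j, hj⟩ := P.nonempty_of_mem_parts hC
      refine ⟨h j, Subtype.ext ?_⟩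
      simp only [F]
      rw [← P.part_eq_of_mem hC hj]
      ext k
      rw [hP, hP, hg]
  let e := Equiv.ofBijective F hF
  have hcard : P.parts.card = s := by
    have := Fintype.card_congr e
    simpa using this.symm
  refine ⟨⟨⟨P, hcard⟩, e.symm⟩, ?_⟩
  funext j
  simp only [surjOf]
  rw [Equiv.symm_apply_eq]
  apply Subtype.ext
  change P.part j = P.part (g (h j))
  ext k
  rw [hP, hP, hg]

lemma card_surj (m s : ℕ) :
    Nat.card { h : Fin m → Fin s // Function.Surjective h } = Nat.factorial s * Stir m s := by
  have e : (Σ P : { P : Finpartition (Finset.univ : Finset (Fin m)) // P.parts.card = s },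
    ({C // C ∈ P.1.parts} ≃ Fin s)) ≃ { h : Fin m → Fin s // Function.Surjective h } :=
    Equiv.ofBijective (fun x => ⟨surjOf x, surjOf_surj x⟩)
      ⟨fun a b hab => surjOf_inj (congrArg Subtype.val hab), fun h => by
        obtain ⟨x, hx⟩ := surjOf_exists h.1 h.2
        exact ⟨x, Subtype.ext hx⟩⟩
  rw [← Nat.card_congr e, Nat.card_sigma]
  have : ∀ P : { P : Finpartition (Finset.univ : Finset (Fin m)) // P.parts.card = s },
      Nat.card ({C // C ∈ P.1.parts} ≃ Fin s) = Nat.factorial s := by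
    intro P
    rw [Nat.card_eq_fintype_card, Fintype.card_equiv (Fintype.equivFinOfCardEq (by simp [P.2]))]
    simp [P.2]
  rw [Finset.sum_congr rfl (fun P _ => this P), Finset.sum_const, smul_eq_mul, mul_comm]
  unfold Stir
  rw [Nat.card_eq_fintype_card]
  rfl

/-- assembling a level function with unique level-one element -/
def asm {m s : ℕ} (ε : Fin (m + 1) → Bool) (i : Fin (m + 1)) (h : Fin m → Fin s) :
    Fin (m + 1) → ℤ :=
  fun j => (if ε j then 1 else -1) *
    (i.insertNth (α := fun _ => ℤ) 1 (fun k => ((h k : ℕ) : ℤ) + 2) j)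

lemma sgn_natAbs (b : Bool) (x : ℤ) : ((if b then (1 : ℤ) else -1) * x).natAbs = x.natAbs := by
  cases b <;> simp

lemma asm_self {m s : ℕ} (ε : Fin (m + 1) → Bool) (i : Fin (m + 1)) (h : Fin m → Fin s) :
    asm ε i h i = (if ε i then 1 else -1) := by
  simp [asm]

lemma asm_other {m s : ℕ} (ε : Fin (m + 1) → Bool) (i : Fin (m + 1)) (h : Fin m → Fin s)
    (k : Fin m) :
    asm ε i h (i.succAbove k) = (if ε (i.succAbove k) then 1 else -1) * (((h k : ℕ) : ℤ) + 2) := by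
  simp [asm]

lemma asm_self_abs {m s : ℕ} (ε : Fin (m + 1) → Bool) (i : Fin (m + 1)) (h : Fin m → Fin s) :
    (asm ε i h i).natAbs = 1 := by
  rw [asm_self]
  cases ε i <;> simp

lemma asm_other_abs {m s : ℕ} (ε : Fin (m + 1) → Bool) (i : Fin (m + 1)) (h : Fin m → Fin s)
    (k : Fin m) : (asm ε i h (i.succAbove k)).natAbs = (h k : ℕ) + 2 := by
  rw [asm_other, sgn_natAbs]; omega

lemma asm_sign {m s : ℕ} (ε : Fin (m + 1) → Bool) (i : Fin (m + 1)) (h : Fin m → Fin s)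
    (j : Fin (m + 1)) : ε j = decide (0 < asm ε i h j) := by
  rcases Fin.eq_self_or_eq_succAbove i j with rfl | ⟨k, rfl⟩
  · rw [asm_self]; cases ε j <;> simp
  · rw [asm_other]
    cases ε (i.succAbove k)
    · simp
    · simp; omega

lemma card_X (m s : ℕ) :
    #((FF (m + 1) (s + 1)).filter fun f => (∀ j, f j ≠ 0) ∧ ∃! j, (f j).natAbs = 1) =
      2 * ((m + 1) * 2 ^ m * Nat.factorial s * Stir m s) := by
  have hc : 2 * ((m + 1) * 2 ^ m * Nat.factorial s * Stir m s) =
      Nat.card ((Fin (m + 1) → Bool) × Fin (m + 1) ×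
        { h : Fin m → Fin s // Function.Surjective h }) := by
    rw [Nat.card_prod, Nat.card_prod, card_surj]
    simp only [Nat.card_eq_fintype_card, Fintype.card_fun, Fintype.card_fin, Fintype.card_bool]
    ring
  rw [hc, Nat.card_eq_fintype_card, ← Finset.card_univ]
  symm
  apply Finset.card_bij (fun x _ => asm x.1 x.2.1 x.2.2.1)
  · rintro ⟨ε, i, h, hh⟩ _
    simp only
    rw [mem_filter, mem_FF]
    refine ⟨⟨?_, ?_⟩, ?_, ?_⟩
    · intro j
      rcases Fin.eq_self_or_eq_succAbove i j with rfl | ⟨k, rfl⟩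
      · rw [asm_self_abs]; omega
      · rw [asm_other_abs]
        have := (h k).2; omega
    · intro l h1 h2
      by_cases hl : l = 1
      · exact ⟨i, by rw [asm_self_abs, hl]⟩
      · obtain ⟨k, hk⟩ := hh ⟨l - 2, by omega⟩
        refine ⟨i.succAbove k, ?_⟩
        rw [asm_other_abs, hk]
        simp only; omega
    · intro j
      rw [← Int.natAbs_ne_zero]
      rcases Fin.eq_self_or_eq_succAbove i j with rfl | ⟨k, rfl⟩
      · rw [asm_self_abs]; omega
      · rw [asm_other_abs]; omega
    · refine ⟨i, asm_self_abs ε i h, ?_⟩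
      intro j hj
      rcases Fin.eq_self_or_eq_succAbove i j with rfl | ⟨k, rfl⟩
      · rfl
      · simp only [asm_other_abs] at hj; omega
  · rintro ⟨ε, i, h, hh⟩ _ ⟨ε', i', h', hh'⟩ _ he
    simp only at he
    have h1 : ε = ε' := by
      funext j
      rw [asm_sign ε i h, asm_sign ε' i' h', he]
    have h2 : i = i' := by
      have a := asm_self_abs ε i h
      rw [he] at a
      rcases Fin.eq_self_or_eq_succAbove i' i with e | ⟨k, e⟩
      · exact e
      · rw [e, asm_other_abs] at a; omega
    subst h1 h2
    have h3 : h = h' := by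
      funext k
      have a := asm_other_abs ε i h k
      rw [he, asm_other_abs] at a
      apply Fin.ext; omega
    subst h3
    rfl
  · intro f hf
    rw [mem_filter, mem_FF] at hf
    obtain ⟨⟨hf1, hf2⟩, hf3, i, hi, hu⟩ := hf
    simp only at hi hu
    have hk : ∀ k : Fin m, 2 ≤ (f (i.succAbove k)).natAbs := by
      intro k
      have h1 := hf3 (i.succAbove k)
      have h2 : (f (i.succAbove k)).natAbs ≠ 1 := fun hc => Fin.succAbove_ne i k (hu _ hc)
      omega
    refine ⟨⟨fun j => decide (0 < f j), i,
      fun k => ⟨(f (i.succAbove k)).natAbs - 2, by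
        have := hf1 (i.succAbove k); have := hk k; omega⟩, ?_⟩, mem_univ _, ?_⟩
    · intro c
      obtain ⟨j, hj⟩ := hf2 (c + 2) (by omega) (by omega)
      rcases Fin.eq_self_or_eq_succAbove i j with rfl | ⟨k, rfl⟩
      · omega
      · refine ⟨k, Fin.ext ?_⟩
        simp only; omega
    · funext j
      have h0 := hf3 j
      rcases Fin.eq_self_or_eq_succAbove i j with rfl | ⟨k, rfl⟩
      · rw [asm_self]
        simp only [decide_eq_true_eq]
        split_ifs <;> omega
      · rw [asm_other]
        have := hk k
        simp only [decide_eq_true_eq]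
        split_ifs <;> omega


lemma mem_negSet (C : Finset ℤ) (x : ℤ) : x ∈ negSet C ↔ -x ∈ C := by
  unfold negSet
  rw [mem_image]
  constructor
  · rintro ⟨y, hy, rfl⟩; rwa [neg_neg]
  · intro h; exact ⟨-x, h, neg_neg x⟩

lemma negSet_negSet (C : Finset ℤ) : negSet (negSet C) = C := by
  ext x
  rw [mem_negSet, mem_negSet, neg_neg]

lemma BPartition.ext_blocks {n : ℕ} {P Q : BPartition n} (h : P.blocks = Q.blocks) : P = Q := by
  cases P; cases Q; cases h; rfl

lemma BPartition.uniq {n : ℕ} (P : BPartition n) {C C' : Finset ℤ} (h : C ∈ P.blocks)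
    (h' : C' ∈ P.blocks) {x : ℤ} (hx : x ∈ C) (hx' : x ∈ C') : C = C' := by
  by_contra hne
  exact Finset.disjoint_left.1 (P.disj C h C' h' hne) hx hx'

instance BPartition.finite (n : ℕ) : Finite (BPartition n) := by
  let B : Finset (Finset (Finset ℤ)) := (Finset.Icc (-(n : ℤ)) n).powerset.powerset
  apply Finite.of_injective (β := {b // b ∈ B}) (fun P => ⟨P.blocks, ?_⟩)
  · intro P Q h
    exact BPartition.ext_blocks (congrArg Subtype.val h)
  · simp only [B, mem_powerset]
    intro C hC
    rw [mem_powerset]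
    intro x hx
    have := (P.cover x).2 ⟨C, hC, hx⟩
    rw [mem_Icc]
    exact abs_le.1 this.2

/-- representatives of the pairs of nonzero blocks -/
noncomputable def RP {n : ℕ} (P : BPartition n) : Finset (Finset ℤ) :=
  P.blocks.filter fun C => negSet C ≠ C ∧ ∃ x ∈ C, 0 < x ∧ ∀ y ∈ C, |x| ≤ |y|

lemma RP_block {n : ℕ} {P : BPartition n} {C : Finset ℤ} (h : C ∈ RP P) : C ∈ P.blocks :=
  (mem_filter.1 h).1

lemma RP_ne {n : ℕ} {P : BPartition n} {C : Finset ℤ} (h : C ∈ RP P) : negSet C ≠ C :=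
  (mem_filter.1 h).2.1

lemma RP_neg {n : ℕ} {P : BPartition n} {C : Finset ℤ} (h : C ∈ RP P) : negSet C ∉ RP P := by
  intro h'
  obtain ⟨h1, h2, x, hx, hx0, hxm⟩ := mem_filter.1 h
  obtain ⟨h1', h2', y, hy, hy0, hym⟩ := mem_filter.1 h'
  have a := hxm (-y) ((mem_negSet _ _).1 hy)
  have b := hym (-x) (by rw [mem_negSet, neg_neg]; exact hx)
  rw [abs_neg, abs_of_pos hx0, abs_of_pos hy0] at a b
  obtain rfl : x = y := by omega
  exact h2 (P.uniq h1' h1 hy hx)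

lemma RP_or {n : ℕ} {P : BPartition n} {C : Finset ℤ} (h : C ∈ P.blocks) (hne : negSet C ≠ C) :
    C ∈ RP P ∨ negSet C ∈ RP P := by
  obtain ⟨x, hx, hm⟩ := exists_min_image C (fun y => |y|) (P.nonempty C h)
  have hx0 := ((P.cover x).2 ⟨C, h, hx⟩).1
  rcases lt_or_gt_of_ne hx0 with hlt | hgt
  · right
    refine mem_filter.2 ⟨P.closed C h, ?_, -x, ?_, by omega, ?_⟩
    · rw [negSet_negSet]; exact hne.symm
    · rw [mem_negSet, neg_neg]; exact hx
    · intro y hy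
      have := hm (-y) ((mem_negSet _ _).1 hy)
      simpa using this
  · left
    exact mem_filter.2 ⟨h, hne, x, hx, hgt, hm⟩

lemma card_nonzero {n : ℕ} (P : BPartition n) :
    #(P.blocks.filter fun C => negSet C ≠ C) = 2 * #(RP P) := by
  have : P.blocks.filter (fun C => negSet C ≠ C) = RP P ∪ (RP P).image negSet := by
    ext C
    rw [mem_filter, mem_union, mem_image]
    constructor
    · rintro ⟨h1, h2⟩
      rcases RP_or h1 h2 with h | h
      · exact Or.inl h
      · exact Or.inr ⟨_, h, negSet_negSet C⟩
    · rintro (h | ⟨D, h, rfl⟩)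
      · exact ⟨RP_block h, RP_ne h⟩
      · refine ⟨P.closed _ (RP_block h), ?_⟩
        rw [negSet_negSet]; exact (RP_ne h).symm
  rw [this, card_union_of_disjoint, card_image_of_injective, two_mul]
  · intro A B hAB
    rw [← negSet_negSet A, ← negSet_negSet B, hAB]
  · rw [Finset.disjoint_left]
    intro C hC hC'
    obtain ⟨D, hD, rfl⟩ := mem_image.1 hC'
    exact RP_neg hD hC

/-- odd extension of a function on indices -/
noncomputable def EE {n : ℕ} (f : Fin n → ℤ) (x : ℤ) : ℤ :=
  if h : x.natAbs - 1 < n then x.sign * f ⟨x.natAbs - 1, h⟩ else 0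

lemma EE_pos {n : ℕ} (f : Fin n → ℤ) (j : Fin n) : EE f ((j : ℤ) + 1) = f j := by
  unfold EE
  have h : ((j : ℤ) + 1).natAbs - 1 = j := by omega
  rw [dif_pos (by rw [h]; exact j.2), Int.sign_eq_one_of_pos (by omega), one_mul]
  congr 1

lemma EE_neg {n : ℕ} (f : Fin n → ℤ) (x : ℤ) : EE f (-x) = - EE f x := by
  unfold EE
  simp only [Int.natAbs_neg, Int.sign_neg]
  split_ifs <;> ring

lemma ground_cases {n : ℕ} {x : ℤ} (h : x ≠ 0 ∧ |x| ≤ (n : ℤ)) :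
    ∃ j : Fin n, x = (j : ℤ) + 1 ∨ x = -((j : ℤ) + 1) := by
  obtain ⟨h1, h2⟩ := h
  obtain ⟨h3, h4⟩ := abs_le.1 h2
  clear h2
  refine ⟨⟨x.natAbs - 1, ?_⟩, ?_⟩
  · omega
  · simp only; omega

lemma ground_pos {n : ℕ} (j : Fin n) : ((j : ℤ) + 1 ≠ 0 ∧ |(j : ℤ) + 1| ≤ (n : ℤ)) := by
  have := j.2
  constructor
  · omega
  · rw [abs_of_pos (by omega)]; omega

/-- label of a representative block -/
noncomputable def lab {n r : ℕ} {P : BPartition n} (e : {C // C ∈ RP P} ≃ Fin r)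
    (ε : {C // C ∈ RP P} → Bool) (C : {C // C ∈ RP P}) : ℤ :=
  (if ε C then 1 else -1) * (((e C : ℕ) : ℤ) + 1)

lemma lab_natAbs {n r : ℕ} {P : BPartition n} (e : {C // C ∈ RP P} ≃ Fin r)
    (ε : {C // C ∈ RP P} → Bool) (C : {C // C ∈ RP P}) : (lab e ε C).natAbs = (e C : ℕ) + 1 := by
  unfold lab
  rw [sgn_natAbs]; omega

lemma lab_sign {n r : ℕ} {P : BPartition n} (e : {C // C ∈ RP P} ≃ Fin r)
    (ε : {C // C ∈ RP P} → Bool) (C : {C // C ∈ RP P}) : ε C = decide (0 < lab e ε C) := by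
  unfold lab
  cases ε C
  · simp
  · simp

noncomputable def sumF {n r : ℕ} {P : BPartition n} (e : {C // C ∈ RP P} ≃ Fin r)
    (ε : {C // C ∈ RP P} → Bool) (x : ℤ) : ℤ :=
  ∑ C : {C // C ∈ RP P}, ((if x ∈ C.1 then lab e ε C else 0) - (if -x ∈ C.1 then lab e ε C else 0))

lemma sumF_neg {n r : ℕ} {P : BPartition n} (e : {C // C ∈ RP P} ≃ Fin r)
    (ε : {C // C ∈ RP P} → Bool) (x : ℤ) : sumF e ε (-x) = - sumF e ε x := by
  unfold sumF
  rw [← sum_neg_distrib]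
  apply sum_congr rfl
  intro C _
  rw [neg_neg]; ring

noncomputable def fL {n r : ℕ} {P : BPartition n} (e : {C // C ∈ RP P} ≃ Fin r)
    (ε : {C // C ∈ RP P} → Bool) : Fin n → ℤ := fun j => sumF e ε ((j : ℤ) + 1)

lemma EE_fL {n r : ℕ} {P : BPartition n} (e : {C // C ∈ RP P} ≃ Fin r)
    (ε : {C // C ∈ RP P} → Bool) {x : ℤ} (hx : x ≠ 0 ∧ |x| ≤ (n : ℤ)) :
    EE (fL e ε) x = sumF e ε x := by
  obtain ⟨j, rfl | rfl⟩ := ground_cases hx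
  · rw [EE_pos]; rfl
  · rw [EE_neg, EE_pos, sumF_neg]; rfl

lemma EE_lab {n r : ℕ} {P : BPartition n} (e : {C // C ∈ RP P} ≃ Fin r)
    (ε : {C // C ∈ RP P} → Bool) (C : {C // C ∈ RP P}) {x : ℤ} (hx : x ∈ C.1) :
    EE (fL e ε) x = lab e ε C := by
  have hg := (P.cover x).2 ⟨C.1, RP_block C.2, hx⟩
  rw [EE_fL e ε hg]
  unfold sumF
  have hneg : ∀ D : {C // C ∈ RP P}, -x ∉ D.1 := by
    intro D hD
    have h1 : x ∈ negSet D.1 := (mem_negSet _ _).2 hD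
    have h2 := P.uniq (P.closed _ (RP_block D.2)) (RP_block C.2) h1 hx
    apply RP_neg D.2
    rw [h2]; exact C.2
  rw [Finset.sum_eq_single C]
  · rw [if_pos hx, if_neg (hneg C), sub_zero]
  · intro D _ hD
    rw [if_neg (hneg D), if_neg, sub_zero]
    intro hxD
    exact hD (Subtype.ext (P.uniq (RP_block D.2) (RP_block C.2) hxD hx))
  · intro h; exact absurd (mem_univ _) h

lemma EE_zero {n r : ℕ} {P : BPartition n} (e : {C // C ∈ RP P} ≃ Fin r)
    (ε : {C // C ∈ RP P} → Bool) {C : Finset ℤ} (hC : C ∈ P.blocks) (hz : negSet C = C)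
    {x : ℤ} (hx : x ∈ C) : EE (fL e ε) x = 0 := by
  have hg := (P.cover x).2 ⟨C, hC, hx⟩
  rw [EE_fL e ε hg]
  unfold sumF
  apply Finset.sum_eq_zero
  intro D _
  have hx' : -x ∈ C := by rw [← mem_negSet, hz]; exact hx
  rw [if_neg, if_neg, sub_zero]
  · intro hc
    have := P.uniq hC (RP_block D.2) hx' hc
    apply RP_ne D.2
    rw [← this]; exact hz
  · intro hc
    have := P.uniq hC (RP_block D.2) hx hc
    apply RP_ne D.2
    rw [← this]; exact hz

/-- trichotomy for ground elements -/
lemma ground_tri {n : ℕ} (P : BPartition n) {x : ℤ} (hx : x ≠ 0 ∧ |x| ≤ (n : ℤ)) :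
    (∃ C ∈ P.blocks, negSet C = C ∧ x ∈ C) ∨ (∃ C : {C // C ∈ RP P}, x ∈ C.1) ∨
      (∃ C : {C // C ∈ RP P}, -x ∈ C.1) := by
  obtain ⟨C, hC, hxC⟩ := (P.cover x).1 hx
  by_cases hz : negSet C = C
  · exact Or.inl ⟨C, hC, hz, hxC⟩
  · right
    rcases RP_or hC hz with h | h
    · exact Or.inl ⟨⟨C, h⟩, hxC⟩
    · exact Or.inr ⟨⟨_, h⟩, by rw [mem_negSet, neg_neg]; exact hxC⟩

lemma EE_lab_neg {n r : ℕ} {P : BPartition n} (e : {C // C ∈ RP P} ≃ Fin r)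
    (ε : {C // C ∈ RP P} → Bool) (C : {C // C ∈ RP P}) {x : ℤ} (hx : -x ∈ C.1) :
    EE (fL e ε) x = - lab e ε C := by
  rw [← EE_lab e ε C hx, EE_neg, neg_neg]

lemma lab_inj {n r : ℕ} {P : BPartition n} (e : {C // C ∈ RP P} ≃ Fin r)
    (ε : {C // C ∈ RP P} → Bool) {C D : {C // C ∈ RP P}}
    (h : (lab e ε C).natAbs = (lab e ε D).natAbs) : C = D := by
  rw [lab_natAbs, lab_natAbs] at h
  apply e.injective
  apply Fin.ext; omega

lemma lab_ne {n r : ℕ} {P : BPartition n} (e : {C // C ∈ RP P} ≃ Fin r)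
    (ε : {C // C ∈ RP P} → Bool) (C : {C // C ∈ RP P}) : lab e ε C ≠ 0 := by
  rw [← Int.natAbs_ne_zero, lab_natAbs]; omega

lemma same_iff {n r : ℕ} {P : BPartition n} (e : {C // C ∈ RP P} ≃ Fin r)
    (ε : {C // C ∈ RP P} → Bool) {x y : ℤ} (hx : x ≠ 0 ∧ |x| ≤ (n : ℤ))
    (hy : y ≠ 0 ∧ |y| ≤ (n : ℤ)) :
    EE (fL e ε) x = EE (fL e ε) y ↔ ∃ C ∈ P.blocks, x ∈ C ∧ y ∈ C := by
  constructor
  · intro h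
    rcases ground_tri P hx with ⟨C, hC, hz, hxC⟩ | ⟨C, hxC⟩ | ⟨C, hxC⟩ <;>
    rcases ground_tri P hy with ⟨D, hD, hzD, hyD⟩ | ⟨D, hyD⟩ | ⟨D, hyD⟩
    · obtain rfl := P.zeroUnique C hC D hD hz hzD
      exact ⟨C, hC, hxC, hyD⟩
    · rw [EE_zero e ε hC hz hxC, EE_lab e ε D hyD] at h
      exact absurd h.symm (lab_ne e ε D)
    · rw [EE_zero e ε hC hz hxC, EE_lab_neg e ε D hyD] at h
      have := lab_ne e ε D; omega
    · rw [EE_zero e ε hD hzD hyD, EE_lab e ε C hxC] at h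
      exact absurd h (lab_ne e ε C)
    · rw [EE_lab e ε C hxC, EE_lab e ε D hyD] at h
      obtain rfl := lab_inj e ε (congrArg Int.natAbs h)
      exact ⟨C.1, RP_block C.2, hxC, hyD⟩
    · rw [EE_lab e ε C hxC, EE_lab_neg e ε D hyD] at h
      obtain rfl := lab_inj e ε (C := C) (D := D) (by omega)
      have := lab_ne e ε C; omega
    · rw [EE_zero e ε hD hzD hyD, EE_lab_neg e ε C hxC] at h
      have := lab_ne e ε C; omega
    · rw [EE_lab_neg e ε C hxC, EE_lab e ε D hyD] at h
      obtain rfl := lab_inj e ε (C := C) (D := D) (by omega)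
      have := lab_ne e ε C; omega
    · rw [EE_lab_neg e ε C hxC, EE_lab_neg e ε D hyD] at h
      obtain rfl := lab_inj e ε (C := C) (D := D) (by omega)
      exact ⟨negSet C.1, P.closed _ (RP_block C.2), (mem_negSet _ _).2 hxC, (mem_negSet _ _).2 hyD⟩
  · rintro ⟨C, hC, hxC, hyC⟩
    by_cases hz : negSet C = C
    · rw [EE_zero e ε hC hz hxC, EE_zero e ε hC hz hyC]
    · rcases RP_or hC hz with h | h
      · rw [EE_lab e ε ⟨C, h⟩ hxC, EE_lab e ε ⟨C, h⟩ hyC]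
      · rw [EE_lab_neg e ε ⟨_, h⟩ (by rw [mem_negSet, neg_neg]; exact hxC),
          EE_lab_neg e ε ⟨_, h⟩ (by rw [mem_negSet, neg_neg]; exact hyC)]

lemma fL_mem {n r : ℕ} {P : BPartition n} (e : {C // C ∈ RP P} ≃ Fin r)
    (ε : {C // C ∈ RP P} → Bool) (hD : IsDPartition P) :
    fL e ε ∈ (FF n r).filter fun f => ¬ ∃! j, (f j).natAbs = 0 := by
  rw [mem_filter, mem_FF]
  refine ⟨⟨?_, ?_⟩, ?_⟩
  · intro j
    rw [← EE_pos (fL e ε) j]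
    rcases ground_tri P (ground_pos j) with ⟨C, hC, hz, hxC⟩ | ⟨C, hxC⟩ | ⟨C, hxC⟩
    · rw [EE_zero e ε hC hz hxC]; simp
    · rw [EE_lab e ε C hxC, lab_natAbs]; have := (e C).2; omega
    · rw [EE_lab_neg e ε C hxC, Int.natAbs_neg, lab_natAbs]; have := (e C).2; omega
  · intro l h1 h2
    obtain ⟨C, hC⟩ := e.surjective ⟨l - 1, by omega⟩
    have hl : (lab e ε C).natAbs = l := by
      rw [lab_natAbs, hC]; simp only; omega
    obtain ⟨x, hx⟩ := P.nonempty C.1 (RP_block C.2)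
    have hE := EE_lab e ε C hx
    obtain ⟨j, rfl | rfl⟩ := ground_cases ((P.cover x).2 ⟨C.1, RP_block C.2, hx⟩)
    · rw [EE_pos] at hE
      exact ⟨j, by rw [hE]; exact hl⟩
    · rw [EE_neg, EE_pos] at hE
      exact ⟨j, by omega⟩
  · rintro ⟨j, hj, hu⟩
    simp only [Int.natAbs_eq_zero] at hj hu
    rw [← EE_pos (fL e ε) j] at hj
    rcases ground_tri P (ground_pos j) with ⟨C, hC, hz, hxC⟩ | ⟨C, hxC⟩ | ⟨C, hxC⟩
    · have h2 := hD C hC hz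
      obtain ⟨y, hy, hne⟩ := Finset.exists_mem_ne (s := C.filter fun x => 0 < x) (by omega) ((j : ℤ) + 1)
      rw [mem_filter] at hy
      obtain ⟨k, rfl | rfl⟩ := ground_cases ((P.cover y).2 ⟨C, hC, hy.1⟩)
      · have := EE_zero e ε hC hz hy.1
        rw [EE_pos] at this
        have := hu k this
        subst this
        exact hne rfl
      · omega
    · rw [EE_lab e ε C hxC] at hj
      exact lab_ne e ε C hj
    · rw [EE_lab_neg e ε C hxC] at hj
      have := lab_ne e ε C; omega

lemma blocks_sub {n : ℕ} (P Q : BPartition n)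
    (h : ∀ x y : ℤ, (x ≠ 0 ∧ |x| ≤ (n : ℤ)) → (y ≠ 0 ∧ |y| ≤ (n : ℤ)) →
      ((∃ C ∈ P.blocks, x ∈ C ∧ y ∈ C) ↔ ∃ C ∈ Q.blocks, x ∈ C ∧ y ∈ C)) :
    P.blocks ⊆ Q.blocks := by
  intro C hC
  obtain ⟨x, hx⟩ := P.nonempty C hC
  have gx := (P.cover x).2 ⟨C, hC, hx⟩
  obtain ⟨D, hD, hxD⟩ := (Q.cover x).1 gx
  have : C = D := by
    ext y
    constructor
    · intro hy
      have gy := (P.cover y).2 ⟨C, hC, hy⟩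
      obtain ⟨D', hD', h1, h2⟩ := (h x y gx gy).1 ⟨C, hC, hx, hy⟩
      rw [Q.uniq hD hD' hxD h1]; exact h2
    · intro hy
      have gy := (Q.cover y).2 ⟨D, hD, hy⟩
      obtain ⟨C', hC', h1, h2⟩ := (h x y gx gy).2 ⟨D, hD, hxD, hy⟩
      rw [P.uniq hC hC' hx h1]; exact h2
  rw [this]; exact hD

lemma fL_inj_P {n r : ℕ} {P Q : BPartition n} (e : {C // C ∈ RP P} ≃ Fin r)
    (ε : {C // C ∈ RP P} → Bool) (e' : {C // C ∈ RP Q} ≃ Fin r)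
    (ε' : {C // C ∈ RP Q} → Bool) (h : fL e ε = fL e' ε') : P = Q := by
  apply BPartition.ext_blocks
  have key : ∀ x y : ℤ, (x ≠ 0 ∧ |x| ≤ (n : ℤ)) → (y ≠ 0 ∧ |y| ≤ (n : ℤ)) →
      ((∃ C ∈ P.blocks, x ∈ C ∧ y ∈ C) ↔ ∃ C ∈ Q.blocks, x ∈ C ∧ y ∈ C) := by
    intro x y hx hy
    rw [← same_iff e ε hx hy, ← same_iff e' ε' hx hy, h]
  exact subset_antisymm (blocks_sub P Q key)
    (blocks_sub Q P fun x y hx hy => (key x y hx hy).symm)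

lemma fL_inj_lab {n r : ℕ} {P : BPartition n} (e : {C // C ∈ RP P} ≃ Fin r)
    (ε : {C // C ∈ RP P} → Bool) (e' : {C // C ∈ RP P} ≃ Fin r)
    (ε' : {C // C ∈ RP P} → Bool) (h : fL e ε = fL e' ε') : e = e' ∧ ε = ε' := by
  have key : ∀ C, lab e ε C = lab e' ε' C := by
    intro C
    obtain ⟨x, hx⟩ := P.nonempty C.1 (RP_block C.2)
    rw [← EE_lab e ε C hx, ← EE_lab e' ε' C hx, h]
  constructor
  · ext C
    have := congrArg Int.natAbs (key C)
    rw [lab_natAbs, lab_natAbs] at this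
    omega
  · funext C
    rw [lab_sign e ε C, lab_sign e' ε' C, key]

noncomputable def GG (n : ℕ) : Finset ℤ := (Finset.Icc (-(n : ℤ)) n).filter (· ≠ 0)

lemma mem_GG {n : ℕ} (x : ℤ) : x ∈ GG n ↔ (x ≠ 0 ∧ |x| ≤ (n : ℤ)) := by
  unfold GG
  rw [mem_filter, mem_Icc, abs_le]; tauto

noncomputable def fib {n : ℕ} (f : Fin n → ℤ) (x : ℤ) : Finset ℤ :=
  (GG n).filter fun y => EE f y = EE f x

lemma GG_neg {n : ℕ} (x : ℤ) : -x ∈ GG n ↔ x ∈ GG n := by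
  rw [mem_GG, mem_GG, abs_neg, neg_ne_zero]

lemma negSet_fib {n : ℕ} (f : Fin n → ℤ) (x : ℤ) : negSet (fib f x) = fib f (-x) := by
  ext y
  rw [mem_negSet]
  unfold fib
  rw [mem_filter, mem_filter, GG_neg, EE_neg, EE_neg]
  constructor <;> rintro ⟨h1, h2⟩ <;> exact ⟨h1, by omega⟩

lemma fib_congr {n : ℕ} (f : Fin n → ℤ) {x y : ℤ} (h : EE f x = EE f y) : fib f x = fib f y := by
  unfold fib; rw [h]

lemma fib_zero {n : ℕ} (f : Fin n → ℤ) {x : ℤ} (hx : x ∈ GG n) (h : negSet (fib f x) = fib f x) :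
    EE f x = 0 := by
  rw [negSet_fib] at h
  have h1 : x ∈ fib f (-x) := by
    rw [h]; exact mem_filter.2 ⟨hx, rfl⟩
  have := (mem_filter.1 h1).2
  rw [EE_neg] at this
  omega

noncomputable def partOf {n : ℕ} (f : Fin n → ℤ) : BPartition n where
  blocks := (GG n).image (fib f)
  cover := by
    intro x
    rw [← mem_GG]
    constructor
    · intro hx
      exact ⟨fib f x, mem_image_of_mem _ hx, mem_filter.2 ⟨hx, rfl⟩⟩
    · rintro ⟨C, hC, hx⟩
      obtain ⟨y, _, rfl⟩ := mem_image.1 hC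
      exact (mem_filter.1 hx).1
  nonempty := by
    intro C hC
    obtain ⟨y, hy, rfl⟩ := mem_image.1 hC
    exact ⟨y, mem_filter.2 ⟨hy, rfl⟩⟩
  disj := by
    intro C hC C' hC' hne
    obtain ⟨y, hy, rfl⟩ := mem_image.1 hC
    obtain ⟨y', hy', rfl⟩ := mem_image.1 hC'
    rw [Finset.disjoint_left]
    intro x hx hx'
    apply hne
    apply fib_congr
    rw [← (mem_filter.1 hx).2, (mem_filter.1 hx').2]
  closed := by
    intro C hC
    obtain ⟨y, hy, rfl⟩ := mem_image.1 hC
    rw [negSet_fib]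
    exact mem_image_of_mem _ ((GG_neg y).2 hy)
  zeroUnique := by
    intro C hC C' hC' hz hz'
    obtain ⟨y, hy, rfl⟩ := mem_image.1 hC
    obtain ⟨y', hy', rfl⟩ := mem_image.1 hC'
    apply fib_congr
    rw [fib_zero f hy hz, fib_zero f hy' hz']

lemma partOf_val {n : ℕ} (f : Fin n → ℤ) {C : Finset ℤ} (hC : C ∈ (partOf f).blocks) {x y : ℤ}
    (hx : x ∈ C) (hy : y ∈ C) : EE f x = EE f y := by
  obtain ⟨z, hz, rfl⟩ := mem_image.1 hC
  rw [(mem_filter.1 hx).2, (mem_filter.1 hy).2]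

lemma partOf_same {n : ℕ} (f : Fin n → ℤ) {C C' : Finset ℤ} (hC : C ∈ (partOf f).blocks)
    (hC' : C' ∈ (partOf f).blocks) {x y : ℤ} (hx : x ∈ C) (hy : y ∈ C') (h : EE f x = EE f y) :
    C = C' := by
  obtain ⟨z, hz, rfl⟩ := mem_image.1 hC
  obtain ⟨z', hz', rfl⟩ := mem_image.1 hC'
  apply fib_congr
  rw [← (mem_filter.1 hx).2, ← (mem_filter.1 hy).2, h]

lemma fL_surj {n r : ℕ} {f : Fin n → ℤ}
    (hf : f ∈ (FF n r).filter fun f => ¬ ∃! j, (f j).natAbs = 0) :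
    ∃ P : BPartition n, IsDPartition P ∧ hasPairs P r ∧
      ∃ (e : {C // C ∈ RP P} ≃ Fin r) (ε : {C // C ∈ RP P} → Bool), fL e ε = f := by
  rw [mem_filter, mem_FF] at hf
  obtain ⟨⟨hf1, hf2⟩, hf3⟩ := hf
  let P := partOf f
  have hrep : ∀ C : {C // C ∈ RP P}, ∃ x, x ∈ C.1 := fun C => P.nonempty _ (RP_block C.2)
  choose xr hxr using hrep
  have hgr : ∀ C, xr C ≠ 0 ∧ |xr C| ≤ (n : ℤ) := fun C =>
    (P.cover _).2 ⟨C.1, RP_block C.2, hxr C⟩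
  have hne : ∀ C, EE f (xr C) ≠ 0 := by
    intro C h0
    apply RP_ne C.2
    apply partOf_same f (P.closed _ (RP_block C.2)) (RP_block C.2) (x := -xr C) (y := xr C)
    · rw [mem_negSet, neg_neg]; exact hxr C
    · exact hxr C
    · rw [EE_neg]; omega
  have hle : ∀ C, (EE f (xr C)).natAbs ≤ r := by
    intro C
    obtain ⟨j, h | h⟩ := ground_cases (hgr C)
    · rw [h, EE_pos]; exact hf1 j
    · rw [h, EE_neg, EE_pos, Int.natAbs_neg]; exact hf1 j
  let F : {C // C ∈ RP P} → Fin r := fun C => ⟨(EE f (xr C)).natAbs - 1, by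
    have := hne C; have := hle C; omega⟩
  have hF : Function.Bijective F := by
    constructor
    · intro C D hCD
      have h1 : (EE f (xr C)).natAbs - 1 = (EE f (xr D)).natAbs - 1 := congrArg Fin.val hCD
      have hc := hne C
      have hd := hne D
      rcases Int.natAbs_eq_natAbs_iff.1
        (show (EE f (xr C)).natAbs = (EE f (xr D)).natAbs by omega) with h | h
      · exact Subtype.ext (partOf_same f (RP_block C.2) (RP_block D.2) (hxr C) (hxr D) h)
      · exfalso
        have : C.1 = negSet D.1 := by
          apply partOf_same f (RP_block C.2) (P.closed _ (RP_block D.2)) (x := xr C) (y := -xr D)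
          · exact hxr C
          · rw [mem_negSet, neg_neg]; exact hxr D
          · rw [EE_neg]; exact h
        apply RP_neg D.2
        rw [← this]; exact C.2
    · intro c
      obtain ⟨j, hj⟩ := hf2 (c + 1) (by omega) (by omega)
      rw [← EE_pos f j] at hj
      rcases ground_tri P (ground_pos j) with ⟨C, hC, hz, hxC⟩ | ⟨C, hxC⟩ | ⟨C, hxC⟩
      · exfalso
        have := partOf_val f hC (x := -((j : ℤ) + 1)) (by rw [← mem_negSet, hz]; exact hxC) hxC
        rw [EE_neg] at this
        omega
      · refine ⟨C, Fin.ext ?_⟩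
        simp only [F]
        rw [partOf_val f (RP_block C.2) (hxr C) hxC]; omega
      · refine ⟨C, Fin.ext ?_⟩
        simp only [F]
        rw [partOf_val f (RP_block C.2) (hxr C) hxC, EE_neg]; omega
  let e := Equiv.ofBijective F hF
  let ε : {C // C ∈ RP P} → Bool := fun C => decide (0 < EE f (xr C))
  have hlab : ∀ C, lab e ε C = EE f (xr C) := by
    intro C
    unfold lab
    have h1 : ((e C : Fin r) : ℕ) = (EE f (xr C)).natAbs - 1 := rfl
    have h2 := hne C
    rw [h1]
    simp only [ε, decide_eq_true_eq]
    split_ifs <;> omega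
  refine ⟨P, ?_, ?_, e, ε, ?_⟩
  · intro C hC hz
    obtain ⟨z, hzg, rfl⟩ := mem_image.1 hC
    have hz0 := fib_zero f hzg hz
    have hmem : ∀ j : Fin n, f j = 0 → (j : ℤ) + 1 ∈ (fib f z).filter fun x => 0 < x := by
      intro j hj
      refine mem_filter.2 ⟨mem_filter.2 ⟨(mem_GG _).2 (ground_pos j), ?_⟩, by omega⟩
      rw [EE_pos, hj, hz0]
    obtain ⟨j, hj⟩ : ∃ j : Fin n, f j = 0 := by
      obtain ⟨j, h | h⟩ := ground_cases ((mem_GG z).1 hzg)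
      · exact ⟨j, by rw [← EE_pos f j, ← h]; exact hz0⟩
      · refine ⟨j, ?_⟩
        rw [h, EE_neg, EE_pos] at hz0; omega
    obtain ⟨k, hk, hkj⟩ : ∃ k, f k = 0 ∧ k ≠ j := by
      by_contra hc
      push Not at hc
      apply hf3
      refine ⟨j, by simp [hj], ?_⟩
      intro k hk
      exact hc k (by simpa using hk)
    have : 1 < #((fib f z).filter fun x => 0 < x) := by
      rw [Finset.one_lt_card]
      refine ⟨_, hmem j hj, _, hmem k hk, ?_⟩
      intro h
      apply hkj
      apply Fin.ext; omega
    exact this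
  · unfold hasPairs
    rw [card_nonzero]
    have := Fintype.card_congr e
    simp only [Fintype.card_coe, Fintype.card_fin] at this
    rw [this]
  · funext j
    rw [← EE_pos (fL e ε) j, ← EE_pos f j]
    rcases ground_tri P (ground_pos j) with ⟨C, hC, hz, hxC⟩ | ⟨C, hxC⟩ | ⟨C, hxC⟩
    · rw [EE_zero e ε hC hz hxC]
      have := partOf_val f hC (x := -((j : ℤ) + 1)) (by rw [← mem_negSet, hz]; exact hxC) hxC
      rw [EE_neg] at this
      omega
    · rw [EE_lab e ε C hxC, hlab]
      exact partOf_val f (RP_block C.2) (hxr C) hxC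
    · rw [EE_lab_neg e ε C hxC, hlab, partOf_val f (RP_block C.2) (hxr C) hxC, EE_neg, neg_neg]

lemma card_SD (n r : ℕ) :
    2 ^ r * Nat.factorial r * SD n r =
      #((FF n r).filter fun f => ¬ ∃! j, (f j).natAbs = 0) := by
  let T := Σ P : { P : BPartition n // IsDPartition P ∧ hasPairs P r },
    ({C // C ∈ RP P.1} ≃ Fin r) × ({C // C ∈ RP P.1} → Bool)
  let U := { f : Fin n → ℤ // f ∈ (FF n r).filter fun f => ¬ ∃! j, (f j).natAbs = 0 }
  let Ψ : T → U := fun x => ⟨fL x.2.1 x.2.2, fL_mem _ _ x.1.2.1⟩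
  have hΨ : Function.Bijective Ψ := by
    constructor
    · rintro ⟨⟨P, hP⟩, e, ε⟩ ⟨⟨Q, hQ⟩, e', ε'⟩ h
      have h' : fL e ε = fL e' ε' := congrArg Subtype.val h
      obtain rfl := fL_inj_P e ε e' ε' h'
      obtain ⟨rfl, rfl⟩ := fL_inj_lab e ε e' ε' h'
      rfl
    · rintro ⟨f, hf⟩
      obtain ⟨P, h1, h2, e, ε, h⟩ := fL_surj hf
      exact ⟨⟨⟨P, h1, h2⟩, e, ε⟩, Subtype.ext h⟩
  have hU : Nat.card U = #((FF n r).filter fun f => ¬ ∃! j, (f j).natAbs = 0) := by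
    simp only [U]
    rw [Nat.card_eq_fintype_card]
    exact Fintype.card_coe _
  rw [← hU, ← Nat.card_congr (Equiv.ofBijective Ψ hΨ)]
  have : Fintype { P : BPartition n // IsDPartition P ∧ hasPairs P r } := Fintype.ofFinite _
  simp only [T]
  rw [Nat.card_sigma]
  have : ∀ P : { P : BPartition n // IsDPartition P ∧ hasPairs P r },
      Nat.card (({C // C ∈ RP P.1} ≃ Fin r) × ({C // C ∈ RP P.1} → Bool)) =
        2 ^ r * Nat.factorial r := by
    intro P
    have hc : #(RP P.1) = r := by
      have h1 := card_nonzero P.1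
      have h2 := P.2.2
      unfold hasPairs at h2
      omega
    rw [Nat.card_prod, Nat.card_eq_fintype_card, Nat.card_eq_fintype_card,
      Fintype.card_equiv (Fintype.equivFinOfCardEq (by simp [hc]))]
    simp [hc, mul_comm]
  rw [Finset.sum_congr rfl (fun P _ => this P), Finset.sum_const, smul_eq_mul, mul_comm]
  unfold SD
  rw [Nat.card_eq_fintype_card]
  rfl

/-- `2^r · r! · S_D(n,r) = Σ_{k=0}^{r} A_D(n,k) · C(n−k, r−k) + n · 2^{n−1} · (r−1)! · S(n−1, r−1)`. -/
theorem stirling_eulerian_typeD (n r : ℕ) (hn : 2 ≤ n) (hr1 : 1 ≤ r) (hrn : r ≤ n) :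
    2 ^ r * Nat.factorial r * SD n r =
      (∑ k ∈ Finset.range (r + 1), EulD n k * Nat.choose (n - k) (r - k)) +
        n * 2 ^ (n - 1) * Nat.factorial (r - 1) * Stir (n - 1) (r - 1) := by
  obtain ⟨m, rfl⟩ : ∃ m, n = m + 1 := ⟨n - 1, by omega⟩
  obtain ⟨s, rfl⟩ : ∃ s, r = s + 1 := ⟨r - 1, by omega⟩
  have h1 := two_sum_EulD (m + 1) (s + 1) hn
  have h2 := sum_ND (m + 1) (s + 1) hn
  rw [transfer_zero hn hr1, transfer_one hn hr1, card_X, ← card_SD, ← h1] at h2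
  simp only [Nat.add_sub_cancel]
  omega
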